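/- arXiv:1501.02072 — 2 statements merged into one kernel-verified Lean document; each statement's English description precedes it below -/
import Mathlib

section
/- Let ψ : (0,+∞) → (0,+∞) be a function such that t ↦ ln ψ(e^t) is Lipschitz. If ∫₁^{+∞} ψ(t) dt = +∞, then Lebesgue-almost every y ∈ ℝ ∖ (ℚ ∪ PSL₂(ℤ)·φ) belongs to WA_ψ; if ∫₁^{+∞} ψ(t) dt < +∞, then WA_ψ has Lebesgue measure zero. -/
open scoped Classical

/-- `α` is a real quadratic irrational: an irrational real number which is the root of a
quadratic polynomial with rational coefficients. -/
def IsQuadIrr (α : ℝ) : Prop :=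
  Irrational α ∧ ∃ a b c : ℚ, a ≠ 0 ∧ (a : ℝ) * α ^ 2 + (b : ℝ) * α + (c : ℝ) = 0

/-- `σ` is the Galois conjugate of the real quadratic irrational `α`: the other root of
its minimal (quadratic) polynomial over `ℚ`. -/
def IsGalConj (α σ : ℝ) : Prop :=
  Irrational α ∧ σ ≠ α ∧
    ∃ a b c : ℚ, a ≠ 0 ∧ (a : ℝ) * α ^ 2 + (b : ℝ) * α + (c : ℝ) = 0 ∧
      (a : ℝ) * σ ^ 2 + (b : ℝ) * σ + (c : ℝ) = 0

/-- The Galois conjugate `α^σ` of a real quadratic irrational `α` (junk value `0` if `α`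
is not a real quadratic irrational). -/
noncomputable def galConj (α : ℝ) : ℝ :=
  if h : ∃ σ, IsGalConj α σ then h.choose else 0

/-- The height `H(α) = 2/|α − α^σ|` of a real quadratic irrational `α`. -/
noncomputable def qiHeight (α : ℝ) : ℝ := 2 / |α - galConj α|

/-- The action of `SL₂(ℤ)` (inducing the action of `PSL₂(ℤ)`) on real numbers by
homographies: the matrix `(a b; c d)` sends `x` to `(a·x+b)/(c·x+d)`. -/
noncomputable def mob (A : Matrix.SpecialLinearGroup (Fin 2) ℤ) (x : ℝ) : ℝ :=
  ((A.1 0 0 : ℝ) * x + (A.1 0 1 : ℝ)) / ((A.1 1 0 : ℝ) * x + (A.1 1 1 : ℝ))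

/-- The orbit `PSL₂(ℤ)·α₀` of a real number under the homography action. -/
def mobOrbit (α₀ : ℝ) : Set ℝ := {α | ∃ A, mob A α₀ = α}

/-- The Golden Ratio `φ = (1+√5)/2`. -/
noncomputable def goldenRat : ℝ := (1 + Real.sqrt 5) / 2

/-- The approximation constant `c(y)` of `y` by the elements of `Z` (with the height
function `H = qiHeight`): the liminf of `H(α)·|y − α|` as `α` ranges over `Z` along the
Fréchet filter, i.e. the sup over finite subsets `F` of the inf over `α ∈ Z ∖ F` of
`H(α)·|y − α|`. -/
noncomputable def approxConst (Z : Set ℝ) (y : ℝ) : ℝ :=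
  ⨆ F : Finset ℝ, ⨅ α : {α : ℝ // α ∈ Z ∧ α ∉ F}, qiHeight α.1 * |y - α.1|

/-- The Lagrange spectrum for the approximation of the elements of
`ℝ ∖ (ℚ ∪ Z)` by the elements of `Z`. -/
noncomputable def lagrangeSpectrum (Z : Set ℝ) : Set ℝ :=
  approxConst Z '' {y : ℝ | Irrational y ∧ y ∉ Z}

/-- The set of `ψ`-well approximable real numbers by the elements of `Z` with height
function `H = qiHeight`: those `y ∈ ℝ ∖ (ℚ ∪ Z)` for which there exist infinitely many
`α ∈ Z` with `|y − α| ≤ ψ(H(α))`. -/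
def WAset (Z : Set ℝ) (ψ : ℝ → ℝ) : Set ℝ :=
  {y : ℝ | Irrational y ∧ y ∉ Z ∧ {α : ℝ | α ∈ Z ∧ |y - α| ≤ ψ (qiHeight α)}.Infinite}

/-- `α` is a root of an integral quadratic polynomial with leading coefficient `A` and
discriminant `5`. -/
def IsRootDiscFive (A : ℤ) (α : ℝ) : Prop :=
  ∃ B C : ℤ, B ^ 2 - 4 * A * C = 5 ∧ (A : ℝ) * α ^ 2 + B * α + C = 0

lemma int_sq_ne_five (B : ℤ) : B ^ 2 ≠ 5 := by
  intro h
  have h1 : B < 3 := by nlinarith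
  have h2 : -3 < B := by nlinarith
  interval_cases B <;> omega

lemma IsRootDiscFive.ne_zero {A : ℤ} {α : ℝ} (h : IsRootDiscFive A α) : A ≠ 0 := by
  rintro rfl
  obtain ⟨B, C, h1, -⟩ := h
  exact int_sq_ne_five B (by linarith)

lemma irrational_of_disc_eq_five {A B C : ℤ} {α : ℝ} (h1 : B ^ 2 - 4 * A * C = 5)
    (h2 : (A : ℝ) * α ^ 2 + B * α + C = 0) : Irrational α := by
  rintro ⟨q, rfl⟩
  have h1' : (B : ℝ) ^ 2 - 4 * A * C = 5 := by exact_mod_cast h1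
  have h3 : (2 * (A : ℝ) * q + B) ^ 2 = 5 := by linear_combination h1' + 4 * (A : ℝ) * h2
  have h4 : Irrational √(5 : ℝ) := by
    have := Nat.Prime.irrational_sqrt (p := 5) (by norm_num)
    exact_mod_cast this
  apply h4
  refine ⟨|2 * A * q + B|, ?_⟩
  push_cast
  rw [← h3, Real.sqrt_sq_eq_abs]

/-- Two rational quadratic polynomials sharing an irrational root have the same roots. -/
lemma root_of_common_irrational_root {a b c a' b' c' : ℚ} {α σ : ℝ} (hα : Irrational α)
    (ha : a ≠ 0) (h : (a : ℝ) * α ^ 2 + b * α + c = 0)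
    (h' : (a' : ℝ) * α ^ 2 + b' * α + c' = 0) (hσ : (a : ℝ) * σ ^ 2 + b * σ + c = 0) :
    (a' : ℝ) * σ ^ 2 + b' * σ + c' = 0 := by
  have key : ((a * b' - a' * b : ℚ) : ℝ) * α + ((a * c' - a' * c : ℚ) : ℝ) = 0 := by
    push_cast
    linear_combination (a : ℝ) * h' - (a' : ℝ) * h
  have hb : a * b' - a' * b = 0 := by
    by_contra hne
    refine hα ⟨-(a * c' - a' * c) / (a * b' - a' * b), ?_⟩
    have hne' : ((a * b' - a' * b : ℚ) : ℝ) ≠ 0 := by exact_mod_cast hne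
    rw [Rat.cast_div, div_eq_iff hne', Rat.cast_neg]
    linarith
  have hc : a * c' - a' * c = 0 := by
    rw [hb] at key
    exact_mod_cast (by simpa using key : (a : ℝ) * c' - a' * c = 0)
  have hb' : (a : ℝ) * b' - a' * b = 0 := by exact_mod_cast hb
  have hc' : (a : ℝ) * c' - a' * c = 0 := by exact_mod_cast hc
  have ha' : (a : ℝ) ≠ 0 := by exact_mod_cast ha
  apply mul_left_cancel₀ ha'
  linear_combination (a' : ℝ) * hσ + σ * hb' + hc'

lemma IsRootDiscFive.qiHeight_eq {A : ℤ} {α : ℝ} (h : IsRootDiscFive A α) :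
    qiHeight α = 2 * |(A : ℝ)| / √5 := by
  have hA : (A : ℝ) ≠ 0 := by exact_mod_cast h.ne_zero
  have hAq : (A : ℚ) ≠ 0 := by exact_mod_cast h.ne_zero
  obtain ⟨B, C, h1, h2⟩ := h
  have hα := irrational_of_disc_eq_five h1 h2
  have h1' : (B : ℝ) ^ 2 - 4 * A * C = 5 := by exact_mod_cast h1
  have hsq : (2 * A * α + B) ^ 2 = 5 := by linear_combination h1' + 4 * (A : ℝ) * h2
  have hex : ∃ σ, IsGalConj α σ := by
    refine ⟨-B / A - α, hα, ?_, A, B, C, hAq, by push_cast; exact h2, ?_⟩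
    · intro heq
      have : 2 * A * α + B = 0 := by
        field_simp at heq
        linarith
      rw [this] at hsq
      norm_num at hsq
    · push_cast
      have e : (A : ℝ) * (-B / A - α) ^ 2 + B * (-B / A - α) + C = A * α ^ 2 + B * α + C := by
        field_simp
        ring
      rw [e, h2]
  have hσ : IsGalConj α (galConj α) := by
    rw [galConj, dif_pos hex]
    exact hex.choose_spec
  obtain ⟨-, hne, a, b, c, ha, hr, hr'⟩ := hσ
  have h3 := root_of_common_irrational_root (a' := A) (b' := B) (c' := C) hα ha hr
    (by push_cast; exact h2) hr'
  push_cast at h3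
  set σ := galConj α
  have h4 : (A : ℝ) * (σ + α) + B = 0 := by
    apply mul_left_cancel₀ (sub_ne_zero.mpr hne)
    linear_combination h3 - h2
  have h5 : |(A : ℝ)| * |α - σ| = √5 := by
    rw [← abs_mul, ← Real.sqrt_sq_eq_abs]
    congr 1
    rw [← hsq]
    congr 1
    linear_combination -h4
  have hpos : 0 < |(A : ℝ)| := abs_pos.mpr hA
  have h6 : |α - σ| = √5 / |(A : ℝ)| := by
    rw [eq_div_iff hpos.ne', mul_comm]
    exact h5
  rw [qiHeight, h6]
  field_simp

lemma goldenRat_sq : goldenRat ^ 2 = goldenRat + 1 := by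
  have h : √(5 : ℝ) ^ 2 = 5 := Real.sq_sqrt (by norm_num)
  unfold goldenRat
  linear_combination h / 4

lemma one_le_goldenRat : 1 ≤ goldenRat := by
  have h : (1 : ℝ) ≤ √5 := by
    rw [Real.one_le_sqrt]
    norm_num
  unfold goldenRat
  linarith

lemma goldenRat_le_two : goldenRat ≤ 2 := by
  nlinarith [goldenRat_sq, one_le_goldenRat]

lemma irrational_goldenRat : Irrational goldenRat :=
  irrational_of_disc_eq_five (A := 1) (B := -1) (C := -1) (by norm_num)
    (by push_cast; linear_combination goldenRat_sq)

/-- The image of the Golden Ratio under `(a b; c d)` is a root of an integral quadratic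
polynomial with discriminant `5` and leading coefficient `d² + cd - c²`. -/
lemma isRootDiscFive_mob (g : Matrix.SpecialLinearGroup (Fin 2) ℤ) :
    IsRootDiscFive (g.1 1 1 ^ 2 + g.1 1 0 * g.1 1 1 - g.1 1 0 ^ 2) (mob g goldenRat) := by
  have hdet := g.2
  rw [Matrix.det_fin_two] at hdet
  unfold mob
  generalize g.1 0 0 = a at *
  generalize g.1 0 1 = b at *
  generalize g.1 1 0 = c at *
  generalize g.1 1 1 = d at *
  have hdet' : (a : ℝ) * d - b * c = 1 := by exact_mod_cast hdet
  refine ⟨-2 * b * d - (a * d + b * c) + 2 * a * c, b ^ 2 + a * b - a ^ 2, ?_, ?_⟩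
  · linear_combination 5 * (a * d - b * c + 1) * hdet
  · have hden : (c : ℝ) * goldenRat + d ≠ 0 := by
      intro h0
      by_cases hc : c = 0
      · subst hc
        have : (d : ℝ) = 0 := by simpa using h0
        rw [this] at hdet'
        simp at hdet'
      · refine irrational_goldenRat ⟨-d / c, ?_⟩
        have hc' : (c : ℝ) ≠ 0 := by exact_mod_cast hc
        push_cast
        field_simp
        linarith
    have hφ := goldenRat_sq
    push_cast
    field_simp
    linear_combination ((a : ℝ) * d - b * c) ^ 2 * hφ

lemma exists_isRootDiscFive_of_mem_mobOrbit {α : ℝ} (h : α ∈ mobOrbit goldenRat) :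
    ∃ A, IsRootDiscFive A α := by
  obtain ⟨g, rfl⟩ := h
  exact ⟨_, isRootDiscFive_mob g⟩

/-- Distinct roots of integral quadratic polynomials of discriminant `5` repel each other. -/
lemma IsRootDiscFive.one_le_of_ne {A A' : ℤ} {α β T₁ T₂ : ℝ} (hα : IsRootDiscFive A α)
    (hβ : IsRootDiscFive A' β) (hne : α ≠ β) (hT : 0 < T₁) (hA : |(A : ℝ)| ∈ Set.Icc T₁ T₂)
    (hA' : |(A' : ℝ)| ∈ Set.Icc T₁ T₂) :
    1 ≤ 2 * T₂ ^ 2 * |α - β| * (|α - β| + 6 / T₁) := by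
  have hA0 : (A : ℝ) ≠ 0 := by exact_mod_cast hα.ne_zero
  have hA0' : (A' : ℝ) ≠ 0 := by exact_mod_cast hβ.ne_zero
  have hAq : (A : ℚ) ≠ 0 := by exact_mod_cast hα.ne_zero
  obtain ⟨B, C, h1, h2⟩ := hα
  obtain ⟨B', C', h1', h2'⟩ := hβ
  have hD : (B : ℝ) ^ 2 - 4 * A * C = 5 := by exact_mod_cast h1
  have hD' : (B' : ℝ) ^ 2 - 4 * A' * C' = 5 := by exact_mod_cast h1'
  obtain ⟨x, hx⟩ : ∃ x : ℝ, x = -B / A - α := ⟨_, rfl⟩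
  obtain ⟨y, hy⟩ : ∃ y : ℝ, y = -B' / A' - β := ⟨_, rfl⟩
  have hB : (B : ℝ) = -A * (α + x) := by rw [hx]; field_simp; ring
  have hB' : (B' : ℝ) = -A' * (β + y) := by rw [hy]; field_simp; ring
  have hC : (C : ℝ) = A * (α * x) := by rw [hB] at h2; linear_combination h2
  have hC' : (C' : ℝ) = A' * (β * y) := by rw [hB'] at h2'; linear_combination h2'
  have hd : (A * (α - x)) ^ 2 = 5 := by rw [← hD, hB, hC]; ring
  have hd' : (A' * (β - y)) ^ 2 = 5 := by rw [← hD', hB', hC']; ring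
  have hcomp : ∀ {D : ℤ} {s t : ℝ}, (D * (s - t)) ^ 2 = 5 → T₁ ≤ |(D : ℝ)| →
      |s - t| ≤ 3 / T₁ := by
    intro D s t h hDT
    rw [le_div_iff₀ hT]
    have h3 : |(D : ℝ) * (s - t)| ≤ 3 := abs_le_of_sq_le_sq (by rw [h]; norm_num) (by norm_num)
    rw [abs_mul] at h3
    nlinarith [abs_nonneg (s - t)]
  have hxy : |x - y| ≤ |α - β| + 6 / T₁ := by
    have e : x - y = -(α - x) + (β - y) + (α - β) := by ring
    calc |x - y| ≤ |α - x| + |β - y| + |α - β| := by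
          rw [e]
          refine (abs_add_le _ _).trans ?_
          gcongr
          refine (abs_add_le _ _).trans ?_
          rw [abs_neg]
      _ ≤ 3 / T₁ + 3 / T₁ + |α - β| := by
          gcongr
          exacts [hcomp hd hA.1, hcomp hd' hA'.1]
      _ = _ := by ring
  have hxne : x ≠ y := by
    intro hxy'
    have hrx : (A : ℝ) * x ^ 2 + B * x + C = 0 := by rw [hB, hC]; ring
    have hry : (A' : ℝ) * x ^ 2 + B' * x + C' = 0 := by rw [hB', hC', hxy']; ring
    have h3 := root_of_common_irrational_root (a := A) (b := B) (c := C) (a' := A') (b' := B')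
      (c' := C') (σ := α) (irrational_of_disc_eq_five h1 hrx) hAq (by push_cast; exact hrx)
      (by push_cast; exact hry) (by push_cast; exact h2)
    push_cast at h3
    have h4 : A' * ((α - β) * (α - x)) = 0 := by
      rw [hB', hC', ← hxy'] at h3
      linear_combination h3
    have h5 : α - x ≠ 0 := by
      intro h0
      rw [h0] at hd
      norm_num at hd
    exact mul_ne_zero hA0' (mul_ne_zero (sub_ne_zero.mpr hne) h5) h4
  obtain ⟨n, hn⟩ : ∃ n : ℤ, (n : ℝ) = 2 * A * A' * (α - β) * (x - y) := by
    have hprod : (A * (α - x)) * (A' * (β - y)) = 5 ∨ (A * (α - x)) * (A' * (β - y)) = -5 := by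
      apply sq_eq_sq_iff_eq_or_eq_neg.mp
      rw [mul_pow, hd, hd']
      norm_num
    rcases hprod with h | h
    · refine ⟨5 - (B * B' - 2 * A * C' - 2 * C * A'), ?_⟩
      push_cast
      rw [hB, hB', hC, hC']
      linear_combination -h
    · refine ⟨-5 - (B * B' - 2 * A * C' - 2 * C * A'), ?_⟩
      push_cast
      rw [hB, hB', hC, hC']
      linear_combination -h
  have hn0 : n ≠ 0 := by
    rintro rfl
    rw [Int.cast_zero] at hn
    have : 2 * A * A' * (α - β) * (x - y) ≠ 0 := by
      have := sub_ne_zero.mpr hne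
      have := sub_ne_zero.mpr hxne
      positivity
    exact this hn.symm
  have hn1 : (1 : ℝ) ≤ |(n : ℝ)| := by exact_mod_cast Int.one_le_abs hn0
  rw [hn, abs_mul, abs_mul, abs_mul, abs_mul, abs_two] at hn1
  have hT₂ : 0 ≤ T₂ := (abs_nonneg _).trans hA.2
  calc (1 : ℝ) ≤ _ := hn1
    _ ≤ 2 * T₂ * T₂ * |α - β| * (|α - β| + 6 / T₁) := by
        gcongr
        exacts [hA.2, hA'.2]
    _ = _ := by ring

/-- A `δ`-separated subset of an interval `[u, v]` is finite, with at most `(v - u) / δ + 1`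
elements. -/
lemma finite_and_ncard_le_of_separated {S : Set ℝ} {u v δ : ℝ} (hδ : 0 < δ) (huv : u ≤ v)
    (hS : S ⊆ Set.Icc u v) (hsep : ∀ s ∈ S, ∀ t ∈ S, s ≠ t → δ ≤ |s - t|) :
    S.Finite ∧ (S.ncard : ℝ) ≤ (v - u) / δ + 1 := by
  have hmaps : Set.MapsTo (fun s : ℝ => ⌊(s - u) / δ⌋₊) S
      (Finset.range (⌊(v - u) / δ⌋₊ + 1) : Set ℕ) := by
    intro s hs
    have := hS hs
    simp only [Finset.coe_range, Set.mem_Iio, Nat.lt_succ_iff]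
    apply Nat.floor_le_floor
    have := this.2
    gcongr
  have hinj : Set.InjOn (fun s : ℝ => ⌊(s - u) / δ⌋₊) S := by
    intro s hs t ht hst
    by_contra hne
    have h1 := hsep s hs t ht hne
    have hs0 : 0 ≤ (s - u) / δ := div_nonneg (by linarith [(hS hs).1]) hδ.le
    have ht0 : 0 ≤ (t - u) / δ := div_nonneg (by linarith [(hS ht).1]) hδ.le
    have a1 := Nat.floor_le hs0
    have a2 := Nat.lt_floor_add_one ((s - u) / δ)
    have b1 := Nat.floor_le ht0
    have b2 := Nat.lt_floor_add_one ((t - u) / δ)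
    simp only at hst
    rw [hst] at a1 a2
    have h2 : |(s - u) / δ - (t - u) / δ| < 1 := by
      rw [abs_lt]
      constructor <;> linarith
    rw [← sub_div, abs_div, abs_of_pos hδ, div_lt_one hδ] at h2
    have : s - u - (t - u) = s - t := by ring
    rw [this] at h2
    linarith
  have hfin : S.Finite := Set.Finite.of_finite_image
    ((Finset.finite_toSet _).subset hmaps.image_subset) hinj
  refine ⟨hfin, ?_⟩
  have hcard := Set.ncard_le_ncard_of_injOn _ hmaps hinj (Finset.finite_toSet _)
  rw [Set.ncard_coe_finset, Finset.card_range] at hcard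
  have h0 : 0 ≤ (v - u) / δ := div_nonneg (by linarith) hδ.le
  calc (S.ncard : ℝ) ≤ ((⌊(v - u) / δ⌋₊ + 1 : ℕ) : ℝ) := by exact_mod_cast hcard
    _ ≤ (v - u) / δ + 1 := by
      push_cast
      linarith [Nat.floor_le h0]

/-- The elements of the orbit of the Golden Ratio whose height is comparable to `T`. -/
def orbitBlock (T₁ T₂ : ℝ) : Set ℝ :=
  {α | α ∈ mobOrbit goldenRat ∧ ∃ A, IsRootDiscFive A α ∧ |(A : ℝ)| ∈ Set.Icc T₁ T₂}

lemma exists_separation_orbitBlock {m M : ℝ} (hm : 0 < m) : ∃ δ : ℝ, 0 < δ ∧ δ ≤ 1 ∧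
    ∀ Q : ℝ, 1 ≤ Q → ∀ α ∈ orbitBlock (m * Q) (M * Q), ∀ β ∈ orbitBlock (m * Q) (M * Q),
      α ≠ β → δ / Q ≤ |α - β| := by
  set K : ℝ := 2 * M ^ 2 * (1 + 6 / m) + 1 with hK
  have hK0 : 1 ≤ K := by
    have : 0 ≤ 2 * M ^ 2 * (1 + 6 / m) := by positivity
    linarith
  refine ⟨1 / K, by positivity, by rw [div_le_one (by positivity)]; exact hK0, ?_⟩
  rintro Q hQ α ⟨-, A, hA, hAm⟩ β ⟨-, A', hA', hAm'⟩ hne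
  have hQ0 : 0 < Q := by linarith
  by_contra! hlt
  have h1 := hA.one_le_of_ne hA' hne (by positivity) hAm hAm'
  have h2 : |α - β| ≤ 1 / Q := hlt.le.trans (by
    gcongr
    rw [div_le_one (by positivity)]; exact hK0)
  have h3 : 2 * (M * Q) ^ 2 * |α - β| * (|α - β| + 6 / (m * Q))
      ≤ 2 * (M * Q) ^ 2 * (1 / K / Q) * (1 / Q + 6 / (m * Q)) := by
    gcongr
  have h4 : 2 * (M * Q) ^ 2 * (1 / K / Q) * (1 / Q + 6 / (m * Q)) = (K - 1) / K := by
    rw [hK]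
    field_simp
    ring
  rw [h4] at h3
  have h5 : (K - 1) / K < 1 := by
    rw [div_lt_one (by positivity)]
    linarith
  linarith

/-- Near every rational number of denominator `q` there is an element of the orbit of the Golden
Ratio, with height comparable to `q²`. -/
lemma exists_mem_orbitBlock_near_rat (r : ℚ) :
    ∃ α ∈ orbitBlock ((r.den : ℝ) ^ 2) (5 * (r.den : ℝ) ^ 2),
      |(r : ℝ) - α| ≤ 1 / (r.den : ℝ) ^ 2 := by
  have hc : (0 : ℤ) < r.den := by exact_mod_cast r.den_pos
  have hcop : IsCoprime r.num (r.den : ℤ) := by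
    rw [Int.isCoprime_iff_gcd_eq_one]
    exact r.reduced
  obtain ⟨s, t, hst⟩ := hcop
  set c : ℤ := (r.den : ℤ)
  set a : ℤ := r.num with ha
  obtain ⟨d, b, hdet, hcd, hdc⟩ : ∃ d b : ℤ, a * d - b * c = 1 ∧ c ≤ d ∧ d < 2 * c := by
    refine ⟨s % c + c, a - a * (s / c) - t, ?_, ?_, ?_⟩
    · have := Int.emod_add_mul_ediv s c
      linear_combination hst + a * this
    · linarith [Int.emod_nonneg s hc.ne']
    · linarith [Int.emod_lt_of_pos s hc]
  let g : Matrix.SpecialLinearGroup (Fin 2) ℤ :=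
    ⟨!![a, b; c, d], by rw [Matrix.det_fin_two_of]; exact hdet⟩
  have hroot := isRootDiscFive_mob g
  have hg : mob g goldenRat = (a * goldenRat + b) / (c * goldenRat + d) := by
    simp [mob, g]
  have hcR : (0 : ℝ) < c := by exact_mod_cast hc
  have hcdR : (c : ℝ) ≤ d := by exact_mod_cast hcd
  have hdcR : (d : ℝ) ≤ 2 * c := by exact_mod_cast hdc.le
  have hdetR : (a : ℝ) * d - b * c = 1 := by exact_mod_cast hdet
  have hcc : ((r.den : ℕ) : ℝ) = (c : ℝ) := by simp [c]
  have hφ := one_le_goldenRat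
  rw [hcc]
  refine ⟨mob g goldenRat, ⟨⟨g, rfl⟩, _, hroot, ?_⟩, ?_⟩
  · simp only [g, Matrix.of_apply, Matrix.cons_val', Matrix.cons_val_zero, Matrix.cons_val_one,
      Matrix.cons_val_fin_one]
    push_cast
    rw [abs_of_nonneg (by nlinarith)]
    constructor <;> nlinarith
  · rw [hg]
    have hr : (r : ℝ) = a / c := by
      rw [Rat.cast_def, hcc]
    have hpos : 0 < (c : ℝ) * goldenRat + d := by nlinarith
    have e : (r : ℝ) - (a * goldenRat + b) / (c * goldenRat + d)
        = 1 / (c * (c * goldenRat + d)) := by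
      rw [hr]
      field_simp
      linear_combination hdetR
    rw [e, abs_of_pos (by positivity)]
    gcongr
    nlinarith

/-- The part of the interval `[u', v']` lying near rational numbers of denominator at most `n`. -/
lemma volume_real_near_rat_le {u v : ℝ} (huv : u ≤ v) (n N : ℕ) :
    MeasureTheory.volume.real (⋃ q ∈ Finset.Icc 1 n, ⋃ p ∈ Finset.Icc ⌈q * u⌉ ⌊q * v⌋,
      Metric.closedBall ((p : ℝ) / q) (1 / ((N + 1) * q))) ≤
    ∑ q ∈ Finset.Icc 1 n, (2 * (v - u) / (N + 1) + 2 / (N + 1) * (1 / (q : ℝ))) := by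
  refine (MeasureTheory.measureReal_biUnion_finset_le _ _).trans (Finset.sum_le_sum fun q hq => ?_)
  have hq1 : 1 ≤ q := (Finset.mem_Icc.mp hq).1
  have hq0 : (0 : ℝ) < q := by exact_mod_cast hq1
  refine (MeasureTheory.measureReal_biUnion_finset_le _ _).trans ?_
  rw [Finset.sum_congr rfl fun p _ => Real.volume_real_closedBall (by positivity)]
  rw [Finset.sum_const, nsmul_eq_mul, Int.card_Icc]
  have hcard : ((⌊q * v⌋ + 1 - ⌈q * u⌉).toNat : ℝ) ≤ q * (v - u) + 1 := by
    have h0 : 0 ≤ q * (v - u) := mul_nonneg hq0.le (by linarith)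
    rcases le_total (⌊q * v⌋ + 1 - ⌈q * u⌉) 0 with h | h
    · rw [Int.toNat_of_nonpos h]
      push_cast
      linarith
    · have : ((⌊q * v⌋ + 1 - ⌈q * u⌉).toNat : ℝ) = ((⌊q * v⌋ + 1 - ⌈q * u⌉ : ℤ) : ℝ) := by
        exact_mod_cast Int.toNat_of_nonneg h
      rw [this]
      push_cast
      linarith [Int.floor_le (q * v), Int.le_ceil (q * u)]
  calc _ ≤ (q * (v - u) + 1) * (2 * (1 / ((N + 1) * q))) := by gcongr
    _ = _ := by field_simp

lemma eventually_sum_one_div_le {η : ℝ} (hη : 0 < η) : ∀ᶠ N : ℕ in Filter.atTop,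
    (1 / N : ℝ) * ∑ q ∈ Finset.Icc 1 N, (1 / (q : ℝ)) ≤ η := by
  have h := (tendsto_one_div_add_atTop_nhds_zero_nat (𝕜 := ℝ)).cesaro
  filter_upwards [h.eventually_le_const hη] with N hN
  have e : ∑ q ∈ Finset.Icc 1 N, (1 / (q : ℝ)) = ∑ i ∈ Finset.range N, 1 / ((i : ℝ) + 1) := by
    have h1 := Finset.sum_Ico_add' (fun q : ℕ => 1 / (q : ℝ)) 0 N 1
    rw [Finset.range_eq_Ico]
    push_cast at h1
    rw [h1]
    rfl
  rwa [one_div, e]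

/-- Every interval contains many elements of the orbit of the Golden Ratio with height comparable
to `N²`, for `N` large. -/
lemma eventually_le_ncard_orbitBlock {u v : ℝ} (huv : u < v) : ∀ᶠ N : ℕ in Filter.atTop,
    (v - u) / 7200 * (N : ℝ) ^ 2 ≤
      (orbitBlock (1 / 576 * (N : ℝ) ^ 2) (5 * (N : ℝ) ^ 2) ∩ Set.Icc u v).ncard := by
  set w := v - u with hw
  have hw0 : 0 < w := by linarith
  obtain ⟨δ, hδ, -, hsep⟩ := exists_separation_orbitBlock (m := 1 / 576) (M := 5) (by norm_num)
  have hlarge : ∀ᶠ N : ℕ in Filter.atTop, 1800 / w ≤ (N : ℝ) :=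
    tendsto_natCast_atTop_atTop.eventually_ge_atTop _
  filter_upwards [eventually_sum_one_div_le (η := w / 24) (by positivity), hlarge,
    Filter.eventually_ge_atTop 1] with N hsum hN hN1
  have hN1R : (1 : ℝ) ≤ N := by exact_mod_cast hN1
  have hNw : 1800 ≤ w * N := by
    rw [div_le_iff₀ hw0] at hN
    linarith
  set S := orbitBlock (1 / 576 * (N : ℝ) ^ 2) (5 * (N : ℝ) ^ 2) ∩ Set.Icc u v
  have hfin : S.Finite := (finite_and_ncard_le_of_separated (δ := δ / (N : ℝ) ^ 2)
    (by positivity) huv.le Set.inter_subset_right fun s hs t ht hne =>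
      hsep _ (one_le_pow₀ hN1R) s hs.1 t ht.1 hne).1
  set n := N / 24
  have hcover : Set.Icc (u + w / 3) (v - w / 3) ⊆
      (⋃ q ∈ Finset.Icc 1 n, ⋃ p ∈ Finset.Icc ⌈q * u⌉ ⌊q * v⌋,
        Metric.closedBall ((p : ℝ) / q) (1 / ((N + 1) * q))) ∪
      ⋃ α ∈ hfin.toFinset, Metric.closedBall α (600 / (N : ℝ) ^ 2) := by
    intro y hy
    obtain ⟨r, hr, hden⟩ := Real.exists_rat_abs_sub_le_and_den_le y hN1
    have hq0 : (0 : ℝ) < r.den := by exact_mod_cast r.den_pos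
    have hq1 : (1 : ℝ) ≤ r.den := by exact_mod_cast r.den_pos
    have hdenR : (r.den : ℝ) ≤ N := by exact_mod_cast hden
    by_cases hqn : r.den ≤ n
    · left
      have hyr : |y - r| ≤ w / 3 := by
        refine hr.trans ?_
        rw [div_le_iff₀ (by positivity)]
        nlinarith
      rw [abs_le] at hyr
      have hreq : (r : ℝ) = r.num / r.den := Rat.cast_def r
      have hru : u ≤ r := by linarith [hyr.1, hyr.2, hy.1, hy.2]
      have hrv : (r : ℝ) ≤ v := by linarith [hyr.1, hyr.2, hy.1, hy.2]
      simp only [Set.mem_iUnion]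
      refine ⟨r.den, Finset.mem_Icc.mpr ⟨r.den_pos, hqn⟩, r.num, ?_, ?_⟩
      · rw [hreq] at hru hrv
        rw [le_div_iff₀ hq0] at hru
        rw [div_le_iff₀ hq0] at hrv
        rw [Finset.mem_Icc, Int.ceil_le, Int.le_floor]
        constructor <;> linarith
      · rw [Metric.mem_closedBall, Real.dist_eq, ← hreq]
        exact hr
    · right
      have hqN : (N : ℝ) ≤ 24 * r.den := by
        have : N ≤ 24 * r.den := by omega
        exact_mod_cast this
      obtain ⟨α, ⟨hα, A, hA, hAm⟩, hrα⟩ := exists_mem_orbitBlock_near_rat r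
      have hyα : |y - α| ≤ 600 / (N : ℝ) ^ 2 := by
        have h1 : 1 / (((N : ℝ) + 1) * r.den) ≤ 24 / (N : ℝ) ^ 2 := by
          rw [div_le_div_iff₀ (by positivity) (by positivity)]
          nlinarith
        have h2 : 1 / (r.den : ℝ) ^ 2 ≤ 576 / (N : ℝ) ^ 2 := by
          rw [div_le_div_iff₀ (by positivity) (by positivity)]
          nlinarith
        calc |y - α| ≤ |y - r| + |r - α| := abs_sub_le _ _ _
          _ ≤ 24 / (N : ℝ) ^ 2 + 576 / (N : ℝ) ^ 2 := by
            gcongr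
            exacts [hr.trans h1, hrα.trans h2]
          _ = _ := by ring
      have hyα' : |y - α| ≤ w / 3 := by
        refine hyα.trans ?_
        rw [div_le_iff₀ (by positivity)]
        nlinarith
      rw [abs_le] at hyα'
      simp only [Set.mem_iUnion]
      refine ⟨α, ?_, by rwa [Metric.mem_closedBall, Real.dist_eq]⟩
      rw [Set.Finite.mem_toFinset]
      refine ⟨⟨hα, A, hA, ?_, ?_⟩, ?_, ?_⟩
      · exact le_trans (by nlinarith) hAm.1
      · exact hAm.2.trans (by gcongr)
      · linarith [hy.1, hyα'.2]
      · linarith [hy.2, hyα'.1]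
  have hmeas := MeasureTheory.measureReal_mono (μ := MeasureTheory.volume) hcover (by
    refine ((MeasureTheory.measure_union_le _ _).trans_lt (ENNReal.add_lt_top.mpr ⟨?_, ?_⟩)).ne
    · refine MeasureTheory.measure_biUnion_lt_top (Finset.finite_toSet _) fun q _ => ?_
      exact MeasureTheory.measure_biUnion_lt_top (Finset.finite_toSet _) fun p _ =>
        MeasureTheory.measure_closedBall_lt_top
    · exact MeasureTheory.measure_biUnion_lt_top (Finset.finite_toSet _) fun q _ =>
        MeasureTheory.measure_closedBall_lt_top)
  have hgood : MeasureTheory.volume.real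
      (⋃ α ∈ hfin.toFinset, Metric.closedBall α (600 / (N : ℝ) ^ 2)) ≤
      S.ncard * (1200 / (N : ℝ) ^ 2) := by
    refine (MeasureTheory.measureReal_biUnion_finset_le _ _).trans ?_
    rw [Finset.sum_congr rfl fun p _ => Real.volume_real_closedBall (by positivity),
      Finset.sum_const, nsmul_eq_mul, Set.ncard_eq_toFinset_card S hfin]
    apply le_of_eq
    ring
  have hbad : MeasureTheory.volume.real (⋃ q ∈ Finset.Icc 1 n,
      ⋃ p ∈ Finset.Icc ⌈q * u⌉ ⌊q * v⌋,
        Metric.closedBall ((p : ℝ) / q) (1 / ((N + 1) * q))) ≤ w / 6 := by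
    refine (volume_real_near_rat_le huv.le n N).trans ?_
    rw [Finset.sum_add_distrib, Finset.sum_const, Nat.card_Icc, nsmul_eq_mul, ← Finset.mul_sum]
    have h1 : ((n + 1 - 1 : ℕ) : ℝ) * (2 * (v - u) / (N + 1)) ≤ w / 12 := by
      have : ((n + 1 - 1 : ℕ) : ℝ) * 24 ≤ N := by
        have : (n + 1 - 1) * 24 ≤ N := by omega
        exact_mod_cast this
      rw [← hw, ← mul_div_assoc, div_le_iff₀ (by positivity)]
      nlinarith
    have h2 : 2 / ((N : ℝ) + 1) * ∑ q ∈ Finset.Icc 1 n, (1 / (q : ℝ)) ≤ w / 12 := by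
      calc _ ≤ 2 / (N : ℝ) * ∑ q ∈ Finset.Icc 1 N, (1 / (q : ℝ)) := by
            gcongr
            · linarith
            · exact Nat.div_le_self _ _
        _ = 2 * (1 / (N : ℝ) * ∑ q ∈ Finset.Icc 1 N, (1 / (q : ℝ))) := by ring
        _ ≤ w / 12 := by linarith
    linarith
  rw [Real.volume_real_Icc_of_le (by linarith)] at hmeas
  have htot := hmeas.trans (MeasureTheory.measureReal_union_le _ _)
  have h3 : w / 6 ≤ S.ncard * (1200 / (N : ℝ) ^ 2) := by linarith
  rw [← mul_div_assoc, le_div_iff₀ (by positivity)] at h3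
  linarith

/-- A weighted form of the Chung-Erdős inequality. -/
lemma two_mul_sum_measureReal_le {X ι : Type*} [MeasurableSpace X] {μ : MeasureTheory.Measure X}
    (I : Finset ι) {B : ι → Set X} (hB : ∀ i ∈ I, MeasurableSet (B i))
    (hfin : ∀ i ∈ I, μ (B i) ≠ ⊤) {s : ℝ} (hs : 0 < s) :
    2 * ∑ i ∈ I, μ.real (B i) ≤
      (∑ i ∈ I, ∑ j ∈ I, μ.real (B i ∩ B j)) / s + s * μ.real (⋃ i ∈ I, B i) := by
  have hU : MeasurableSet (⋃ i ∈ I, B i) := Finset.measurableSet_biUnion _ hB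
  have hUfin : μ (⋃ i ∈ I, B i) ≠ ⊤ :=
    (MeasureTheory.measure_biUnion_lt_top (Finset.finite_toSet I)
      fun i hi => (hfin i hi).lt_top).ne
  have hint : ∀ {E : Set X}, MeasurableSet E → μ E ≠ ⊤ →
      MeasureTheory.Integrable (E.indicator (1 : X → ℝ)) μ := fun hE hE' =>
    (MeasureTheory.integrable_indicator_iff hE).mpr (MeasureTheory.integrableOn_const hE')
  have hIJ : ∀ i ∈ I, ∀ j ∈ I, MeasureTheory.Integrable ((B i ∩ B j).indicator (1 : X → ℝ)) μ :=
    fun i hi j hj => hint ((hB i hi).inter (hB j hj))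
      (MeasureTheory.measure_ne_top_of_subset Set.inter_subset_left (hfin i hi))
  have hF1 : ∫ x, ∑ i ∈ I, (B i).indicator (1 : X → ℝ) x ∂μ = ∑ i ∈ I, μ.real (B i) := by
    rw [MeasureTheory.integral_finsetSum _ fun i hi => hint (hB i hi) (hfin i hi)]
    exact Finset.sum_congr rfl fun i hi => MeasureTheory.integral_indicator_one (hB i hi)
  have hF2 : ∫ x, ∑ i ∈ I, ∑ j ∈ I, (B i ∩ B j).indicator (1 : X → ℝ) x ∂μ =
      ∑ i ∈ I, ∑ j ∈ I, μ.real (B i ∩ B j) := by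
    rw [MeasureTheory.integral_finsetSum _ fun i hi =>
      MeasureTheory.integrable_finsetSum _ fun j hj => hIJ i hi j hj]
    refine Finset.sum_congr rfl fun i hi => ?_
    rw [MeasureTheory.integral_finsetSum _ fun j hj => hIJ i hi j hj]
    exact Finset.sum_congr rfl fun j hj =>
      MeasureTheory.integral_indicator_one ((hB i hi).inter (hB j hj))
  have hU1 : ∫ x, (⋃ i ∈ I, B i).indicator (1 : X → ℝ) x ∂μ = μ.real (⋃ i ∈ I, B i) :=
    MeasureTheory.integral_indicator_one hU
  have hi1 : MeasureTheory.Integrable (fun x => ∑ i ∈ I, (B i).indicator (1 : X → ℝ) x) μ :=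
    MeasureTheory.integrable_finsetSum _ fun i hi => hint (hB i hi) (hfin i hi)
  have hi2 : MeasureTheory.Integrable
      (fun x => ∑ i ∈ I, ∑ j ∈ I, (B i ∩ B j).indicator (1 : X → ℝ) x) μ :=
    MeasureTheory.integrable_finsetSum _ fun i hi =>
      MeasureTheory.integrable_finsetSum _ fun j hj => hIJ i hi j hj
  rw [← hF1, ← hF2, ← hU1, ← MeasureTheory.integral_const_mul, ← MeasureTheory.integral_const_mul,
    ← MeasureTheory.integral_div,
    ← MeasureTheory.integral_add (hi2.div_const s) ((hint hU hUfin).const_mul s)]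
  refine MeasureTheory.integral_mono (hi1.const_mul 2)
    ((hi2.div_const s).add ((hint hU hUfin).const_mul s)) fun x => ?_
  simp only
  have hsq : ∑ i ∈ I, ∑ j ∈ I, (B i ∩ B j).indicator (1 : X → ℝ) x =
      (∑ i ∈ I, (B i).indicator (1 : X → ℝ) x) ^ 2 := by
    rw [sq, Finset.sum_mul_sum]
    refine Finset.sum_congr rfl fun i _ => Finset.sum_congr rfl fun j _ => ?_
    rw [Set.inter_indicator_one, Pi.mul_apply]
  rw [hsq]
  by_cases hx : x ∈ ⋃ i ∈ I, B i
  · rw [Set.indicator_of_mem hx, Pi.one_apply]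
    set F := ∑ i ∈ I, (B i).indicator (1 : X → ℝ) x
    have e : F ^ 2 / s + s * 1 - 2 * F = (F - s) ^ 2 / s := by
      field_simp
      ring
    have : 0 ≤ (F - s) ^ 2 / s := by positivity
    linarith
  · have h0 : ∑ i ∈ I, (B i).indicator (1 : X → ℝ) x = 0 := by
      refine Finset.sum_eq_zero fun i hi => Set.indicator_of_notMem (fun h => hx ?_) _
      exact Set.mem_biUnion hi h
    rw [h0, Set.indicator_of_notMem hx]
    simp

/-- Quasi-independence of two families of balls centred at well separated points. -/
lemma sum_volume_real_inter_le {S S' : Finset ℝ} {u v δ P Q a b : ℝ} (hδ : 0 < δ) (huv : u < v)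
    (hP : 0 < P) (hQ : 0 < Q) (hPJ : δ ≤ (v - u) * P) (ha : 0 ≤ a) (hb : 0 ≤ b) (hbδ : b ≤ δ)
    (hS : (S : Set ℝ) ⊆ Set.Icc u v)
    (hsep : ∀ s ∈ S, ∀ t ∈ S, s ≠ t → δ / P ≤ |s - t|)
    (hsep' : ∀ s ∈ S', ∀ t ∈ S', s ≠ t → δ / Q ≤ |s - t|) :
    ∑ s ∈ S, ∑ t ∈ S', MeasureTheory.volume.real
      (Metric.closedBall s (a / P) ∩ Metric.closedBall t (b / Q)) ≤
      (8 / δ ^ 2 + 12 / δ) * (v - u) * (a * b + b * (P / Q)) := by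
  have hcard : (S.card : ℝ) ≤ 2 * ((v - u) * P / δ) := by
    have h := (finite_and_ncard_le_of_separated (δ := δ / P) (by positivity) huv.le hS
      fun s hs t ht => hsep s hs t ht).2
    rw [Set.ncard_coe_finset] at h
    have h1 : (v - u) / (δ / P) = (v - u) * P / δ := by field_simp
    have h2 : 1 ≤ (v - u) * P / δ := by rwa [le_div_iff₀ hδ, one_mul]
    linarith
  have hone : ∀ s ∈ S, ∑ t ∈ S', MeasureTheory.volume.real
      (Metric.closedBall s (a / P) ∩ Metric.closedBall t (b / Q)) ≤
      (2 * a * Q / (P * δ) + 3) * (2 * (b / Q)) := by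
    intro s _
    set ρ := a / P + b / Q with hρ
    have hρ0 : 0 ≤ ρ := by positivity
    set R := S'.filter fun t => |s - t| ≤ ρ
    have hsub : (R : Set ℝ) ⊆ Set.Icc (s - ρ) (s + ρ) := by
      intro t ht
      have := (Finset.mem_filter.mp ht).2
      rw [abs_le] at this
      constructor <;> linarith
    have hR : (R.card : ℝ) ≤ 2 * a * Q / (P * δ) + 3 := by
      have h := (finite_and_ncard_le_of_separated (δ := δ / Q) (by positivity) (by linarith) hsub
        fun s hs t ht => hsep' s (Finset.mem_filter.mp hs).1 t (Finset.mem_filter.mp ht).1).2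
      rw [Set.ncard_coe_finset] at h
      have h1 : (s + ρ - (s - ρ)) / (δ / Q) = 2 * a * Q / (P * δ) + 2 * (b / δ) := by
        rw [hρ]
        field_simp
        ring
      have h2 : b / δ ≤ 1 := by rwa [div_le_one hδ]
      linarith
    calc _ = ∑ t ∈ R, MeasureTheory.volume.real
          (Metric.closedBall s (a / P) ∩ Metric.closedBall t (b / Q)) := by
          symm
          apply Finset.sum_filter_of_ne
          intro t _ hne
          by_contra hlt
          apply hne
          have : Disjoint (Metric.closedBall s (a / P)) (Metric.closedBall t (b / Q)) := by
            apply Metric.closedBall_disjoint_closedBall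
            rw [Real.dist_eq]
            push Not at hlt
            exact hlt
          rw [this.inter_eq]
          simp
      _ ≤ ∑ t ∈ R, 2 * (b / Q) := by
          refine Finset.sum_le_sum fun t _ => ?_
          rw [← Real.volume_real_closedBall (a := t) (by positivity : 0 ≤ b / Q)]
          exact MeasureTheory.measureReal_mono Set.inter_subset_right
            MeasureTheory.measure_closedBall_lt_top.ne
      _ ≤ _ := by
          rw [Finset.sum_const, nsmul_eq_mul]
          gcongr
  calc _ ≤ ∑ s ∈ S, (2 * a * Q / (P * δ) + 3) * (2 * (b / Q)) := Finset.sum_le_sum hone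
    _ ≤ 2 * ((v - u) * P / δ) * ((2 * a * Q / (P * δ) + 3) * (2 * (b / Q))) := by
      rw [Finset.sum_const, nsmul_eq_mul]
      gcongr
    _ = (v - u) * (8 / δ ^ 2 * (a * b) + 12 / δ * (b * (P / Q))) := by
      field_simp
      ring
    _ ≤ (v - u) * ((8 / δ ^ 2 + 12 / δ) * (a * b) + (8 / δ ^ 2 + 12 / δ) * (b * (P / Q))) := by
      have hw : 0 < v - u := by linarith
      gcongr
      · have : 0 < 12 / δ := by positivity
        linarith
      · have : 0 < 8 / δ ^ 2 := by positivity
        linarith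
    _ = _ := by ring

lemma sum_ite_four_pow_div_le (I : Finset ℕ) (l : ℕ) :
    ∑ k ∈ I, (if k ≤ l then (4 : ℝ) ^ k / 4 ^ l else 0) ≤ 2 := by
  have hgeom : ∀ n : ℕ, ∑ k ∈ Finset.range (n + 1), (4 : ℝ) ^ k ≤ 2 * 4 ^ n := by
    intro n
    induction n with
    | zero => norm_num
    | succ n ih =>
      rw [Finset.sum_range_succ, pow_succ]
      have : (0 : ℝ) < 4 ^ n := by positivity
      linarith
  rw [← Finset.sum_filter, ← Finset.sum_div, div_le_iff₀ (by positivity)]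
  refine le_trans (Finset.sum_le_sum_of_subset_of_nonneg ?_ fun _ _ _ => by positivity) (hgeom l)
  intro k hk
  simpa [Nat.lt_succ_iff] using (Finset.mem_filter.mp hk).2

/-- A union of balls centred at dense well separated families of points has measure bounded below
as soon as the sum of the normalised radii is large. -/
lemma le_volume_real_biUnion_balls {c δ : ℝ} (hc : 0 < c) (hδ : 0 < δ) : ∃ κ : ℝ, 0 < κ ∧
    ∀ (u v : ℝ) (S : ℕ → Finset ℝ) (a : ℕ → ℝ) (I : Finset ℕ), u < v →
      (∀ k ∈ I, (S k : Set ℝ) ⊆ Set.Icc u v) →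
      (∀ k ∈ I, ∀ s ∈ S k, ∀ t ∈ S k, s ≠ t → δ / 4 ^ k ≤ |s - t|) →
      (∀ k ∈ I, c * (v - u) * 4 ^ k ≤ (S k).card) → (∀ k ∈ I, δ ≤ (v - u) * 4 ^ k) →
      (∀ k, 0 ≤ a k) → (∀ k, a k ≤ δ) → 1 ≤ ∑ k ∈ I, a k →
      κ * (v - u) ≤ MeasureTheory.volume.real
        (⋃ k ∈ I, ⋃ s ∈ S k, Metric.closedBall s (a k / 4 ^ k)) := by
  set K : ℝ := 8 / δ ^ 2 + 12 / δ with hK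
  have hK0 : 0 < K := by positivity
  refine ⟨4 * c ^ 2 / (5 * K), by positivity, ?_⟩
  intro u v S a I huv hS hsep hcard hlarge ha haδ hA1
  set A := ∑ k ∈ I, a k with hA
  have hw : 0 < v - u := by linarith
  have hpair : ∀ k ∈ I, ∀ l ∈ I, ∑ s ∈ S k, ∑ t ∈ S l, MeasureTheory.volume.real
      (Metric.closedBall s (a k / 4 ^ k) ∩ Metric.closedBall t (a l / 4 ^ l)) ≤
      K * (v - u) * (a k * a l + a l * (if k ≤ l then (4 : ℝ) ^ k / 4 ^ l else 0) +
        a k * (if l ≤ k then (4 : ℝ) ^ l / 4 ^ k else 0)) := by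
    have key : ∀ k ∈ I, ∀ l ∈ I, k ≤ l → ∑ s ∈ S k, ∑ t ∈ S l, MeasureTheory.volume.real
        (Metric.closedBall s (a k / 4 ^ k) ∩ Metric.closedBall t (a l / 4 ^ l)) ≤
        K * (v - u) * (a k * a l + a l * (if k ≤ l then (4 : ℝ) ^ k / 4 ^ l else 0)) := by
      intro k hk l hl hkl
      rw [if_pos hkl]
      exact sum_volume_real_inter_le hδ huv (by positivity) (by positivity) (hlarge k hk) (ha k)
        (ha l) (haδ l) (hS k hk) (hsep k hk) (hsep l hl)
    have hnn : ∀ k l : ℕ, 0 ≤ a k * (if l ≤ k then (4 : ℝ) ^ l / 4 ^ k else 0) := by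
      intro k l
      have := ha k
      split_ifs <;> positivity
    intro k hk l hl
    rcases le_total k l with hkl | hlk
    · refine (key k hk l hl hkl).trans ?_
      refine mul_le_mul_of_nonneg_left ?_ (by positivity)
      linarith [hnn k l]
    · rw [Finset.sum_comm]
      simp_rw [Set.inter_comm (Metric.closedBall _ (a k / 4 ^ k))]
      refine (key l hl k hk hlk).trans ?_
      refine mul_le_mul_of_nonneg_left ?_ (by positivity)
      linarith [hnn l k, mul_comm (a k) (a l)]
  have hsecond : ∑ k ∈ I, ∑ l ∈ I, ∑ s ∈ S k, ∑ t ∈ S l, MeasureTheory.volume.real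
      (Metric.closedBall s (a k / 4 ^ k) ∩ Metric.closedBall t (a l / 4 ^ l)) ≤
      5 * K * (v - u) * A ^ 2 := by
    calc _ ≤ ∑ k ∈ I, ∑ l ∈ I, K * (v - u) * (a k * a l +
          a l * (if k ≤ l then (4 : ℝ) ^ k / 4 ^ l else 0) +
          a k * (if l ≤ k then (4 : ℝ) ^ l / 4 ^ k else 0)) :=
          Finset.sum_le_sum fun k hk => Finset.sum_le_sum fun l hl => hpair k hk l hl
      _ = K * (v - u) * (A ^ 2 +
          ∑ l ∈ I, a l * ∑ k ∈ I, (if k ≤ l then (4 : ℝ) ^ k / 4 ^ l else 0) +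
          ∑ k ∈ I, a k * ∑ l ∈ I, (if l ≤ k then (4 : ℝ) ^ l / 4 ^ k else 0)) := by
          simp_rw [← Finset.mul_sum, Finset.sum_add_distrib]
          rw [hA, sq, Finset.sum_mul_sum]
          congr 3
          · rw [Finset.sum_comm]
            simp_rw [Finset.mul_sum]
          · simp_rw [Finset.mul_sum]
      _ ≤ K * (v - u) * (A ^ 2 + ∑ l ∈ I, a l * 2 + ∑ k ∈ I, a k * 2) := by
          gcongr with l hl l hl
          · exact ha l
          · exact sum_ite_four_pow_div_le _ _
          · exact ha l
          · exact sum_ite_four_pow_div_le _ _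
      _ ≤ _ := by
          rw [← Finset.sum_mul, ← hA]
          have : A ≤ A ^ 2 := by nlinarith
          have h0 : 0 < K * (v - u) := by positivity
          nlinarith
  have hfirst : 2 * c * (v - u) * A ≤
      ∑ k ∈ I, ∑ s ∈ S k, MeasureTheory.volume.real (Metric.closedBall s (a k / 4 ^ k)) := by
    rw [hA, Finset.mul_sum]
    refine Finset.sum_le_sum fun k hk => ?_
    have hak := ha k
    rw [Finset.sum_congr rfl fun s _ => Real.volume_real_closedBall (by positivity),
      Finset.sum_const, nsmul_eq_mul]
    calc _ = c * (v - u) * 4 ^ k * (2 * (a k / 4 ^ k)) := by field_simp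
      _ ≤ _ := by
        gcongr
        exact hcard k hk
  set U := ⋃ k ∈ I, ⋃ s ∈ S k, Metric.closedBall s (a k / 4 ^ k)
  set s : ℝ := 5 * K * A / (2 * c) with hs
  have hs0 : 0 < s := by positivity
  have hCE := two_mul_sum_measureReal_le (μ := MeasureTheory.volume) (I.sigma S)
    (B := fun i : (_ : ℕ) × ℝ => Metric.closedBall i.2 (a i.1 / 4 ^ i.1))
    (fun i _ => measurableSet_closedBall)
    (fun i _ => MeasureTheory.measure_closedBall_lt_top.ne) hs0
  have hU : (⋃ i ∈ I.sigma S, Metric.closedBall i.2 (a i.1 / 4 ^ i.1)) = U := by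
    ext y
    simp only [U, Set.mem_iUnion, Finset.mem_sigma]
    constructor
    · rintro ⟨⟨k, t⟩, ⟨hk, ht⟩, hy⟩
      exact ⟨k, hk, t, ht, hy⟩
    · rintro ⟨k, hk, t, ht, hy⟩
      exact ⟨⟨k, t⟩, ⟨hk, ht⟩, hy⟩
  simp_rw [hU, Finset.sum_sigma] at hCE
  have hsecond' : ∑ k ∈ I, ∑ s ∈ S k, ∑ l ∈ I, ∑ t ∈ S l, MeasureTheory.volume.real
      (Metric.closedBall s (a k / 4 ^ k) ∩ Metric.closedBall t (a l / 4 ^ l)) ≤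
      5 * K * (v - u) * A ^ 2 := by
    refine le_trans (le_of_eq (Finset.sum_congr rfl fun k _ => ?_)) hsecond
    rw [Finset.sum_comm]
  have h1 : 4 * c * (v - u) * A ≤ 5 * K * (v - u) * A ^ 2 / s +
      s * MeasureTheory.volume.real U := by
    have h2 := div_le_div_of_nonneg_right hsecond' hs0.le
    linarith
  have h2 : 5 * K * (v - u) * A ^ 2 / s = 2 * c * (v - u) * A := by
    rw [hs]
    field_simp
  rw [h2] at h1
  have h3 : 2 * c * (v - u) * A ≤ s * MeasureTheory.volume.real U := by linarith
  have h4 : 4 * c ^ 2 / (5 * K) * (v - u) = 2 * c * (v - u) * A / s := by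
    rw [hs]
    field_simp
    ring
  rw [h4, div_le_iff₀ hs0]
  linarith

/-- In every interval, the set of points approximated at infinitely many scales with a
non-summable rate has proportionally large measure. -/
lemma exists_large_limsup : ∃ δ κ : ℝ, 0 < δ ∧ 0 < κ ∧ ∀ a : ℕ → ℝ, (∀ k, 0 ≤ a k) →
    (∀ k, a k ≤ δ) → ¬ Summable a → ∀ u v : ℝ, u < v → ∃ T : Set ℝ, MeasurableSet T ∧
      T ⊆ Set.Icc u v ∧ κ * (v - u) ≤ MeasureTheory.volume.real T ∧
      ∀ y ∈ T, ∃ᶠ k : ℕ in Filter.atTop,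
        ∃ α ∈ orbitBlock (1 / 576 * 4 ^ k) (5 * 4 ^ k), |y - α| ≤ a k / 4 ^ k := by
  obtain ⟨δ, hδ, -, hsep⟩ := exists_separation_orbitBlock (m := 1 / 576) (M := 5) (by norm_num)
  obtain ⟨κ, hκ, hmain⟩ := le_volume_real_biUnion_balls (c := 1 / 7200) (by norm_num) hδ
  refine ⟨δ, κ, hδ, hκ, ?_⟩
  intro a ha haδ hsum u v huv
  have h4 : ∀ k : ℕ, (1 : ℝ) ≤ 4 ^ k := fun k => one_le_pow₀ (by norm_num)
  have hfin : ∀ k : ℕ, (orbitBlock (1 / 576 * 4 ^ k) (5 * 4 ^ k) ∩ Set.Icc u v).Finite := fun k =>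
    (finite_and_ncard_le_of_separated (δ := δ / 4 ^ k) (by positivity) huv.le
      Set.inter_subset_right fun s hs t ht hne => hsep _ (h4 k) s hs.1 t ht.1 hne).1
  set S : ℕ → Finset ℝ := fun k => (hfin k).toFinset with hS
  have hmemS : ∀ {k s}, s ∈ S k ↔ s ∈ orbitBlock (1 / 576 * 4 ^ k) (5 * 4 ^ k) ∩ Set.Icc u v :=
    fun {k s} => Set.Finite.mem_toFinset _
  set U : ℕ → Set ℝ := fun k => ⋃ s ∈ S k, Metric.closedBall s (a k / 4 ^ k) with hU
  have hUmeas : ∀ k, MeasurableSet (U k) := fun k =>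
    Finset.measurableSet_biUnion _ fun _ _ => measurableSet_closedBall
  set V : ℕ → Set ℝ := fun m => ⋃ k ∈ Set.Ici m, U k with hV
  have hVmeas : ∀ m, MeasurableSet (V m) := fun m =>
    MeasurableSet.biUnion (Set.to_countable _) fun k _ => hUmeas k
  have hVanti : Antitone V := fun m n hmn =>
    Set.biUnion_subset_biUnion_left (Set.Ici_subset_Ici.mpr hmn)
  have hVsub : ∀ m, V m ⊆ Set.Icc (u - δ / 4 ^ m) (v + δ / 4 ^ m) := by
    intro m y hy
    simp only [V, U, Set.mem_iUnion, Set.mem_Ici] at hy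
    obtain ⟨k, hk, s, hs, hys⟩ := hy
    have hsI := (hmemS.mp hs).2
    rw [Metric.mem_closedBall, Real.dist_eq] at hys
    have h1 : a k / 4 ^ k ≤ δ / 4 ^ m := by
      have := haδ k
      gcongr
      norm_num
    have h2 := abs_le.mp (hys.trans h1)
    constructor <;> linarith [hsI.1, hsI.2]
  have hVfin : ∀ m, MeasureTheory.volume (V m) ≠ ⊤ := fun m =>
    MeasureTheory.measure_ne_top_of_subset (hVsub m) measure_Icc_lt_top.ne
  have hVlarge : ∀ m, κ * (v - u) ≤ MeasureTheory.volume.real (V m) := by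
    intro m
    have hcount := (tendsto_pow_atTop_atTop_of_one_lt (α := ℕ) one_lt_two).eventually
      (eventually_le_ncard_orbitBlock huv)
    have hbig : ∀ᶠ k : ℕ in Filter.atTop, δ / (v - u) ≤ (4 : ℝ) ^ k :=
      (tendsto_pow_atTop_atTop_of_one_lt (by norm_num)).eventually_ge_atTop _
    obtain ⟨p, hp⟩ := Filter.eventually_atTop.mp
      ((hcount.and hbig).and (Filter.eventually_ge_atTop m))
    obtain ⟨n, hpn, hn⟩ : ∃ n, p ≤ n ∧ 1 + ∑ k ∈ Finset.range p, a k ≤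
        ∑ k ∈ Finset.range n, a k := by
      have ht := (not_summable_iff_tendsto_nat_atTop_of_nonneg ha).mp hsum
      exact ((Filter.eventually_ge_atTop p).and (ht.eventually_ge_atTop _)).exists
    have hw : 0 < v - u := by linarith
    have hI : ∀ k ∈ Finset.Ico p n, p ≤ k := fun k hk => (Finset.mem_Ico.mp hk).1
    refine (hmain u v S a (Finset.Ico p n) huv ?_ ?_ ?_ ?_ ha haδ ?_).trans
      (MeasureTheory.measureReal_mono ?_ (hVfin m))
    · exact fun k _ s hs => (hmemS.mp hs).2
    · exact fun k _ s hs t ht hne => hsep _ (h4 k) s (hmemS.mp hs).1 t (hmemS.mp ht).1 hne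
    · intro k hk
      have h := (hp k (hI k hk)).1.1
      have e : (((2 ^ k : ℕ) : ℝ)) ^ 2 = 4 ^ k := by
        push_cast
        rw [← pow_mul, mul_comm, pow_mul]
        norm_num
      rw [e, Set.ncard_eq_toFinset_card _ (hfin k)] at h
      refine le_trans (le_of_eq ?_) h
      ring
    · intro k hk
      have h := (hp k (hI k hk)).1.2
      rw [div_le_iff₀ hw] at h
      linarith
    · rw [Finset.sum_Ico_eq_sub _ hpn]
      linarith
    · intro y hy
      simp only [Set.mem_iUnion] at hy
      obtain ⟨k, hk, hy⟩ := hy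
      exact Set.mem_biUnion (Set.mem_Ici.mpr (hp k (hI k hk)).2) (Set.mem_iUnion₂.mpr hy)
  refine ⟨⋂ m, V m, MeasurableSet.iInter hVmeas, ?_, ?_, ?_⟩
  · intro y hy
    have hy' := fun m => hVsub m (Set.mem_iInter.mp hy m)
    have hlim : Filter.Tendsto (fun m : ℕ => δ / (4 : ℝ) ^ m) Filter.atTop (nhds 0) :=
      (tendsto_pow_atTop_atTop_of_one_lt (by norm_num)).const_div_atTop δ
    have h1 := hlim.const_sub u
    have h2 := hlim.const_add v
    rw [sub_zero] at h1
    rw [add_zero] at h2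
    exact ⟨le_of_tendsto' h1 fun m => (hy' m).1, ge_of_tendsto' h2 fun m => (hy' m).2⟩
  · have ht := MeasureTheory.tendsto_measure_iInter_atTop (μ := MeasureTheory.volume)
      (fun m => (hVmeas m).nullMeasurableSet) hVanti ⟨0, hVfin 0⟩
    have hfinite : MeasureTheory.volume (⋂ m, V m) ≠ ⊤ :=
      MeasureTheory.measure_ne_top_of_subset (Set.iInter_subset V 0) (hVfin 0)
    exact ge_of_tendsto' ((ENNReal.tendsto_toReal hfinite).comp ht) hVlarge
  · intro y hy
    rw [Filter.frequently_atTop]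
    intro m
    have hym := Set.mem_iInter.mp hy m
    simp only [V, U, Set.mem_iUnion, Set.mem_Ici] at hym
    obtain ⟨k, hk, s, hs, hys⟩ := hym
    exact ⟨k, hk, s, (hmemS.mp hs).1, by rwa [Metric.mem_closedBall, Real.dist_eq] at hys⟩

/-- A set having a uniformly positive proportion in every interval has full measure. -/
lemma volume_compl_eq_zero_of_density {G : Set ℝ} {κ : ℝ} (hκ : 0 < κ)
    (h : ∀ u v : ℝ, u < v → ∃ T : Set ℝ, MeasurableSet T ∧ T ⊆ Set.Icc u v ∧ T ⊆ G ∧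
      κ * (v - u) ≤ MeasureTheory.volume.real T) : MeasureTheory.volume Gᶜ = 0 := by
  have hd := Besicovitch.ae_tendsto_measure_inter_div MeasureTheory.volume Gᶜ
  have hbound : ∀ x r : ℝ, 0 < r → MeasureTheory.volume (Gᶜ ∩ Metric.closedBall x r) /
      MeasureTheory.volume (Metric.closedBall x r) ≤ ENNReal.ofReal (1 - κ) := by
    intro x r hr
    obtain ⟨T, hTm, hTI, hTG, hT⟩ := h (x - r) (x + r) (by linarith)
    rw [← Real.closedBall_eq_Icc] at hTI
    have hTfin : MeasureTheory.volume T ≠ ⊤ :=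
      MeasureTheory.measure_ne_top_of_subset hTI MeasureTheory.measure_closedBall_lt_top.ne
    have hsub : Gᶜ ∩ Metric.closedBall x r ⊆ Metric.closedBall x r \ T :=
      fun y hy => ⟨hy.2, fun hyT => hy.1 (hTG hyT)⟩
    refine ENNReal.div_le_of_le_mul ((MeasureTheory.measure_mono hsub).trans ?_)
    rw [MeasureTheory.measure_sdiff hTI hTm.nullMeasurableSet hTfin, Real.volume_closedBall,
      ← ENNReal.ofReal_toReal hTfin, ← ENNReal.ofReal_sub _ ENNReal.toReal_nonneg,
      ← ENNReal.ofReal_mul' (by positivity)]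
    apply ENNReal.ofReal_le_ofReal
    rw [MeasureTheory.measureReal_def] at hT
    linarith
  have hfalse : ∀ᵐ x ∂(MeasureTheory.volume.restrict Gᶜ), False := by
    filter_upwards [hd] with x hx
    have h1 : (1 : ENNReal) ≤ ENNReal.ofReal (1 - κ) :=
      le_of_tendsto hx (Filter.eventually_of_mem self_mem_nhdsWithin fun r hr => hbound x r hr)
    rw [ENNReal.one_le_ofReal] at h1
    linarith
  rw [Filter.eventually_false_iff_eq_bot, MeasureTheory.ae_eq_bot,
    MeasureTheory.Measure.restrict_eq_zero] at hfalse
  exact hfalse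

lemma exists_doubling_const {ψ : ℝ → ℝ} (hψpos : ∀ t, 0 < t → 0 < ψ t)
    (hLip : ∃ L : NNReal, LipschitzWith L fun t : ℝ => Real.log (ψ (Real.exp t))) {M : ℝ}
    (hM : 1 ≤ M) : ∃ C : ℝ, 0 < C ∧ ∀ s t : ℝ, 0 < s → 0 < t → s ≤ M * t → t ≤ M * s →
      ψ s ≤ C * ψ t := by
  obtain ⟨L, hL⟩ := hLip
  refine ⟨Real.exp (L * Real.log M), Real.exp_pos _, fun s t hs ht hst hts => ?_⟩
  have h := hL.dist_le_mul (Real.log s) (Real.log t)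
  simp only [Real.exp_log hs, Real.exp_log ht, Real.dist_eq] at h
  have hM0 : 0 < M := by linarith
  have hlog : |Real.log s - Real.log t| ≤ Real.log M := by
    have h1 := Real.log_le_log hs hst
    have h2 := Real.log_le_log ht hts
    rw [Real.log_mul hM0.ne' ht.ne'] at h1
    rw [Real.log_mul hM0.ne' hs.ne'] at h2
    rw [abs_le]
    constructor <;> linarith
  have h3 : Real.log (ψ s) ≤ L * Real.log M + Real.log (ψ t) := by
    have : (L : ℝ) * |Real.log s - Real.log t| ≤ L * Real.log M := by gcongr
    linarith [(abs_le.mp h).2]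
  rw [← Real.exp_log (hψpos s hs), ← Real.exp_log (hψpos t ht), ← Real.exp_add]
  exact Real.exp_le_exp.mpr h3

lemma lintegral_Ioi_one_lt_top_iff {ψ : ℝ → ℝ} (hψpos : ∀ t, 0 < t → 0 < ψ t)
    (hLip : ∃ L : NNReal, LipschitzWith L fun t : ℝ => Real.log (ψ (Real.exp t))) :
    (∫⁻ t in Set.Ioi (1 : ℝ), ENNReal.ofReal (ψ t)) < ⊤ ↔
      Summable fun k : ℕ => (4 : ℝ) ^ k * ψ (4 ^ k) := by
  obtain ⟨C, hC, hdoub⟩ := exists_doubling_const hψpos hLip (M := 4) (by norm_num)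
  have hmono : Monotone fun k : ℕ => (4 : ℝ) ^ k := pow_right_mono₀ (by norm_num)
  have hunion : (⋃ k : ℕ, Set.Ioc ((4 : ℝ) ^ k) (4 ^ (k + 1))) = Set.Ioi 1 := by
    have := iUnion_Ioc_map_succ_eq_Ioi (f := fun k : ℕ => (4 : ℝ) ^ k) (fun k => hmono bot_le)
      (Filter.not_bddAbove_of_tendsto_atTop (tendsto_pow_atTop_atTop_of_one_lt (by norm_num)))
    simpa using this
  have hdisj := hmono.pairwise_disjoint_on_Ioc_succ
  have hsplit : (∫⁻ t in Set.Ioi (1 : ℝ), ENNReal.ofReal (ψ t)) =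
      ∑' k : ℕ, ∫⁻ t in Set.Ioc ((4 : ℝ) ^ k) (4 ^ (k + 1)), ENNReal.ofReal (ψ t) := by
    rw [← hunion]
    exact MeasureTheory.lintegral_iUnion (fun _ => measurableSet_Ioc) hdisj _
  have hvol : ∀ k : ℕ, MeasureTheory.volume (Set.Ioc ((4 : ℝ) ^ k) (4 ^ (k + 1))) =
      ENNReal.ofReal (3 * 4 ^ k) := by
    intro k
    rw [Real.volume_Ioc]
    congr 1
    ring
  have hψ0 : ∀ k : ℕ, 0 < ψ (4 ^ k) := fun k => hψpos _ (by positivity)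
  have hcomp : ∀ k : ℕ, ∀ t ∈ Set.Ioc ((4 : ℝ) ^ k) (4 ^ (k + 1)),
      ψ t ≤ C * ψ (4 ^ k) ∧ ψ (4 ^ k) ≤ C * ψ t := by
    intro k t ht
    have h4 : (0 : ℝ) < 4 ^ k := by positivity
    have ht0 : 0 < t := h4.trans ht.1
    have h1 : t ≤ 4 * 4 ^ k := by
      have := ht.2
      rw [pow_succ] at this
      linarith
    have h2 : (4 : ℝ) ^ k ≤ 4 * t := by linarith [ht.1]
    exact ⟨hdoub _ _ ht0 h4 h1 h2, hdoub _ _ h4 ht0 h2 h1⟩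
  have hupper : ∀ k : ℕ, ∫⁻ t in Set.Ioc ((4 : ℝ) ^ k) (4 ^ (k + 1)), ENNReal.ofReal (ψ t) ≤
      ENNReal.ofReal (3 * C * (4 ^ k * ψ (4 ^ k))) := by
    intro k
    calc _ ≤ ∫⁻ _ in Set.Ioc ((4 : ℝ) ^ k) (4 ^ (k + 1)), ENNReal.ofReal (C * ψ (4 ^ k)) :=
          MeasureTheory.setLIntegral_mono' measurableSet_Ioc fun t ht =>
            ENNReal.ofReal_le_ofReal (hcomp k t ht).1
      _ = _ := by
          rw [MeasureTheory.setLIntegral_const, hvol, ← ENNReal.ofReal_mul' (by positivity)]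
          congr 1
          ring
  have hlower : ∀ k : ℕ, ENNReal.ofReal (3 / C * (4 ^ k * ψ (4 ^ k))) ≤
      ∫⁻ t in Set.Ioc ((4 : ℝ) ^ k) (4 ^ (k + 1)), ENNReal.ofReal (ψ t) := by
    intro k
    calc _ = ∫⁻ _ in Set.Ioc ((4 : ℝ) ^ k) (4 ^ (k + 1)), ENNReal.ofReal (ψ (4 ^ k) / C) := by
          rw [MeasureTheory.setLIntegral_const, hvol, ← ENNReal.ofReal_mul' (by positivity)]
          congr 1
          ring
      _ ≤ _ := MeasureTheory.setLIntegral_mono' measurableSet_Ioc fun t ht =>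
            ENNReal.ofReal_le_ofReal (by
              rw [div_le_iff₀ hC, mul_comm]
              exact (hcomp k t ht).2)
  rw [hsplit]
  constructor
  · intro hlt
    have h1 : ∑' k : ℕ, ENNReal.ofReal (3 / C * (4 ^ k * ψ (4 ^ k))) ≠ ⊤ :=
      ((ENNReal.tsum_le_tsum hlower).trans_lt hlt).ne
    have h2 := ENNReal.summable_toReal h1
    have h3 : (fun k : ℕ => (ENNReal.ofReal (3 / C * (4 ^ k * ψ (4 ^ k)))).toReal) =
        fun k : ℕ => 3 / C * (4 ^ k * ψ (4 ^ k)) := by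
      funext k
      have := hψ0 k
      exact ENNReal.toReal_ofReal (by positivity)
    rw [h3] at h2
    exact (summable_mul_left_iff (by positivity)).mp h2
  · intro hsum
    exact (ENNReal.tsum_le_tsum hupper).trans_lt (hsum.mul_left (3 * C)).tsum_ofReal_lt_top

lemma two_le_sqrt_five : (2 : ℝ) ≤ √5 := by
  rw [Real.le_sqrt (by norm_num) (by norm_num)]
  norm_num

lemma sqrt_five_le_three : √(5 : ℝ) ≤ 3 := by
  rw [Real.sqrt_le_left (by norm_num)]
  norm_num

lemma IsRootDiscFive.qiHeight_mem_Icc {A : ℤ} {α : ℝ} (h : IsRootDiscFive A α) :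
    qiHeight α ∈ Set.Icc (2 / 3 * |(A : ℝ)|) |(A : ℝ)| := by
  have h2 := two_le_sqrt_five
  have h3 := sqrt_five_le_three
  have hA := abs_nonneg (A : ℝ)
  rw [h.qiHeight_eq]
  constructor
  · rw [le_div_iff₀ (by linarith)]
    nlinarith
  · rw [div_le_iff₀ (by linarith)]
    nlinarith

lemma IsRootDiscFive.one_le_abs {A : ℤ} {α : ℝ} (h : IsRootDiscFive A α) :
    (1 : ℝ) ≤ |(A : ℝ)| := by
  exact_mod_cast Int.one_le_abs h.ne_zero

/-- The divergence case. -/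
lemma volume_compl_setOf_infinite_eq_zero {ψ : ℝ → ℝ} (hψpos : ∀ t, 0 < t → 0 < ψ t)
    (hLip : ∃ L : NNReal, LipschitzWith L fun t : ℝ => Real.log (ψ (Real.exp t)))
    (hdiv : ¬ Summable fun k : ℕ => (4 : ℝ) ^ k * ψ (4 ^ k)) :
    MeasureTheory.volume
      {y : ℝ | {α : ℝ | α ∈ mobOrbit goldenRat ∧ |y - α| ≤ ψ (qiHeight α)}.Infinite}ᶜ = 0 := by
  obtain ⟨δ, κ, hδ, hκ, hmain⟩ := exists_large_limsup
  obtain ⟨C, hC, hdoub⟩ := exists_doubling_const hψpos hLip (M := 1000) (by norm_num)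
  have hψ0 : ∀ k : ℕ, 0 < ψ (4 ^ k) := fun k => hψpos _ (by positivity)
  set a : ℕ → ℝ := fun k => min δ (4 ^ k * ψ (4 ^ k) / C) with ha
  have hsum : ¬ Summable a := by
    intro hs
    apply hdiv
    have hev : ∀ᶠ k in Filter.atTop, a k < δ :=
      hs.tendsto_atTop_zero.eventually_lt_const hδ
    have hs' : Summable fun k : ℕ => (4 : ℝ) ^ k * ψ (4 ^ k) / C := by
      refine (summable_congr_atTop ?_).mp hs
      filter_upwards [hev] with k hk
      rcases min_lt_iff.mp hk with h | h
      · exact absurd h (lt_irrefl _)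
      · exact min_eq_right h.le
    exact (summable_div_const_iff hC.ne').mp hs'
  refine volume_compl_eq_zero_of_density hκ fun u v huv => ?_
  obtain ⟨T, hTm, hTI, hT, happrox⟩ := hmain a
    (fun k => le_min hδ.le (div_nonneg (mul_nonneg (by positivity) (hψ0 k).le) hC.le))
    (fun k => min_le_left _ _) hsum u v huv
  refine ⟨T, hTm, hTI, fun y hy hfin => ?_, hT⟩
  obtain ⟨H, hH⟩ := (hfin.image qiHeight).bddAbove
  have hlarge : ∀ᶠ k : ℕ in Filter.atTop, H * 864 < (4 : ℝ) ^ k :=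
    (tendsto_pow_atTop_atTop_of_one_lt (by norm_num)).eventually_gt_atTop _
  obtain ⟨k, ⟨α, ⟨hα, A, hA, hAm⟩, hyα⟩, hk⟩ := ((happrox y hy).and_eventually hlarge).exists
  have h4 : (0 : ℝ) < 4 ^ k := by positivity
  have hHt := hA.qiHeight_mem_Icc
  have hlow : 1 / 864 * 4 ^ k ≤ qiHeight α := by linarith [hHt.1, hAm.1]
  have hupp : qiHeight α ≤ 5 * 4 ^ k := by linarith [hHt.2, hAm.2]
  have hψ : ψ (4 ^ k) ≤ C * ψ (qiHeight α) :=
    hdoub _ _ h4 (by linarith) (by linarith) (by linarith)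
  have hmem : α ∈ {α : ℝ | α ∈ mobOrbit goldenRat ∧ |y - α| ≤ ψ (qiHeight α)} := by
    refine ⟨hα, hyα.trans ?_⟩
    calc a k / 4 ^ k ≤ 4 ^ k * ψ (4 ^ k) / C / 4 ^ k := by
          gcongr
          exact min_le_right _ _
      _ = ψ (4 ^ k) / C := by field_simp
      _ ≤ ψ (qiHeight α) := by
          rw [div_le_iff₀ hC]
          linarith
  have := hH (Set.mem_image_of_mem qiHeight hmem)
  linarith

/-- The convergence case. -/
lemma volume_WAset_inter_Icc_eq_zero {ψ : ℝ → ℝ} (hψpos : ∀ t, 0 < t → 0 < ψ t)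
    (hLip : ∃ L : NNReal, LipschitzWith L fun t : ℝ => Real.log (ψ (Real.exp t)))
    (hconv : Summable fun k : ℕ => (4 : ℝ) ^ k * ψ (4 ^ k)) (n : ℕ) :
    MeasureTheory.volume (WAset (mobOrbit goldenRat) ψ ∩ Set.Icc (-n : ℝ) n) = 0 := by
  obtain ⟨δ, hδ, hδ1, hsep⟩ := exists_separation_orbitBlock (m := 1) (M := 4) (by norm_num)
  obtain ⟨C, hC, hdoub⟩ := exists_doubling_const hψpos hLip (M := 8) (by norm_num)
  have hψ0 : ∀ k : ℕ, 0 < ψ (4 ^ k) := fun k => hψpos _ (by positivity)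
  have h4 : ∀ k : ℕ, (1 : ℝ) ≤ 4 ^ k := fun k => one_le_pow₀ (by norm_num)
  obtain ⟨b, hb⟩ : ∃ b, ∀ k : ℕ, (4 : ℝ) ^ k * ψ (4 ^ k) ≤ b := by
    obtain ⟨b, hb⟩ := hconv.tendsto_atTop_zero.bddAbove_range
    exact ⟨b, fun k => hb (Set.mem_range_self k)⟩
  set r : ℕ → ℝ := fun k => C * ψ (4 ^ k) with hr
  have hr0 : ∀ k, 0 < r k := fun k => mul_pos hC (hψ0 k)
  have hrb : ∀ k, r k ≤ C * b := by
    intro k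
    have : ψ (4 ^ k) ≤ 4 ^ k * ψ (4 ^ k) := le_mul_of_one_le_left (hψ0 k).le (h4 k)
    have := this.trans (hb k)
    simp only [hr]
    gcongr
  set F : ℕ → Set ℝ := fun k =>
    orbitBlock (1 * 4 ^ k) (4 * 4 ^ k) ∩ Set.Icc (-n - r k) (n + r k) with hF
  have hn0 : (0 : ℝ) ≤ n := n.cast_nonneg
  have hcount : ∀ k, (F k).Finite ∧
      ((F k).ncard : ℝ) ≤ (n + r k - (-n - r k)) / (δ / 4 ^ k) + 1 := fun k =>
    finite_and_ncard_le_of_separated (by positivity) (by linarith [hr0 k]) Set.inter_subset_right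
      fun s hs t ht hne => hsep _ (h4 k) s hs.1 t ht.1 hne
  set D : ℝ := (2 * n + 2 * (C * b)) / δ + 1 with hD
  have hcard : ∀ k, ((F k).ncard : ℝ) ≤ D * 4 ^ k := by
    intro k
    refine (hcount k).2.trans ?_
    calc (n + r k - (-n - r k)) / (δ / 4 ^ k) + 1
        ≤ (2 * n + 2 * (C * b)) / (δ / 4 ^ k) + 4 ^ k := by
          gcongr
          · linarith [hrb k]
          · exact h4 k
      _ = D * 4 ^ k := by
          rw [hD]
          field_simp
  set E : ℕ → Set ℝ := fun k => ⋃ α ∈ (hcount k).1.toFinset, Metric.closedBall α (r k) with hE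
  have hEvol : ∀ k, MeasureTheory.volume (E k) ≤
      ENNReal.ofReal (2 * D * C * (4 ^ k * ψ (4 ^ k))) := by
    intro k
    refine (MeasureTheory.measure_biUnion_finset_le _ _).trans ?_
    simp only [Real.volume_closedBall]
    rw [Finset.sum_const, nsmul_eq_mul, ← Set.ncard_eq_toFinset_card _ (hcount k).1,
      ← ENNReal.ofReal_natCast, ← ENNReal.ofReal_mul (Nat.cast_nonneg _)]
    apply ENNReal.ofReal_le_ofReal
    calc ((F k).ncard : ℝ) * (2 * r k) ≤ D * 4 ^ k * (2 * r k) := by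
          have := hr0 k
          gcongr
          exact hcard k
      _ = _ := by
          simp only [hr]
          ring
  have hEsum : ∑' k, MeasureTheory.volume (E k) ≠ ⊤ :=
    ((ENNReal.tsum_le_tsum hEvol).trans_lt (hconv.mul_left (2 * D * C)).tsum_ofReal_lt_top).ne
  have hae := MeasureTheory.ae_eventually_notMem hEsum
  rw [MeasureTheory.ae_iff] at hae
  refine MeasureTheory.measure_mono_null ?_ hae
  rintro y ⟨⟨-, -, hinf⟩, hy⟩ hev
  obtain ⟨k₀, hk₀⟩ := Filter.eventually_atTop.mp hev
  refine hinf (Set.Finite.subset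
    (Set.Finite.biUnion (Set.finite_Iio k₀) fun k _ => (hcount k).1) ?_)
  rintro α ⟨hα, hyα⟩
  obtain ⟨A, hA⟩ := exists_isRootDiscFive_of_mem_mobOrbit hα
  obtain ⟨k, hk1, hk2⟩ := exists_nat_pow_near hA.one_le_abs (by norm_num : (1 : ℝ) < 4)
  have hHt := hA.qiHeight_mem_Icc
  have h4k : (0 : ℝ) < 4 ^ k := by positivity
  rw [pow_succ] at hk2
  have hψ : ψ (qiHeight α) ≤ r k :=
    hdoub _ _ (by linarith [hHt.1]) h4k (by linarith [hHt.2]) (by linarith [hHt.1])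
  have hyr := hyα.trans hψ
  have hyr' := abs_le.mp hyr
  have hmem : α ∈ F k := by
    refine ⟨⟨hα, A, hA, ?_, ?_⟩, ?_, ?_⟩
    · linarith
    · linarith
    · linarith [hy.1, hyr'.2]
    · linarith [hy.2, hyr'.1]
  refine Set.mem_biUnion (x := k) ?_ hmem
  by_contra hk
  refine hk₀ k (not_lt.mp hk) ?_
  exact Set.mem_biUnion ((hcount k).1.mem_toFinset.mpr hmem)
    (by rwa [Metric.mem_closedBall, Real.dist_eq])

/-- Parkkonen-Paulin (Khintchine-type theorem for approximation by the orbit of the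
Golden Ratio): let `ψ : (0,+∞) → (0,+∞)` be such that `t ↦ ln ψ(eᵗ)` is Lipschitz. If
`∫₁^∞ ψ(t) dt = +∞` then Lebesgue-almost every `y ∈ ℝ ∖ (ℚ ∪ PSL₂(ℤ)·φ)` is
`ψ`-well approximable, and if `∫₁^∞ ψ(t) dt < +∞` then `WA_ψ` has Lebesgue measure
zero. -/
theorem khintchine_goldenRatio (ψ : ℝ → ℝ) (hψpos : ∀ t, 0 < t → 0 < ψ t)
    (hLip : ∃ L : NNReal, LipschitzWith L fun t : ℝ => Real.log (ψ (Real.exp t))) :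
    ((∫⁻ t in Set.Ioi (1 : ℝ), ENNReal.ofReal (ψ t)) = ⊤ →
      MeasureTheory.volume
        ({y : ℝ | Irrational y ∧ y ∉ mobOrbit goldenRat} \
          WAset (mobOrbit goldenRat) ψ) = 0) ∧
    ((∫⁻ t in Set.Ioi (1 : ℝ), ENNReal.ofReal (ψ t)) < ⊤ →
      MeasureTheory.volume (WAset (mobOrbit goldenRat) ψ) = 0) := by
  constructor
  · intro htop
    have hdiv : ¬ Summable fun k : ℕ => (4 : ℝ) ^ k * ψ (4 ^ k) := fun hs =>
      ((lintegral_Ioi_one_lt_top_iff hψpos hLip).mpr hs).ne htop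
    refine MeasureTheory.measure_mono_null ?_
      (volume_compl_setOf_infinite_eq_zero hψpos hLip hdiv)
    rintro y ⟨⟨hirr, hnot⟩, hyW⟩ hinf
    exact hyW ⟨hirr, hnot, hinf⟩
  · intro hlt
    have hconv := (lintegral_Ioi_one_lt_top_iff hψpos hLip).mp hlt
    refine MeasureTheory.measure_mono_null ?_
      (MeasureTheory.measure_iUnion_null (volume_WAset_inter_Icc_eq_zero hψpos hLip hconv))
    intro y hy
    obtain ⟨n, hn⟩ := exists_nat_ge |y|
    exact Set.mem_iUnion.mpr ⟨n, hy, abs_le.mp hn⟩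
end

section
/- Let α₀ and β₀ be real quadratic irrationals. Then (i) for every γ ∈ PSL₂(ℤ) fixing α₀ and every β ∈ PSL₂(ℤ)·β₀ ∖ {α₀, α₀^σ}, one has γ·β ∉ {α₀, α₀^σ} and H_{α₀}(γ·β) = H_{α₀}(β); and (ii) for every s > 0, the set {β ∈ PSL₂(ℤ)·β₀ ∖ {α₀, α₀^σ} : H_{α₀}(β) ≤ s} meets only finitely many orbits of the stabiliser PSL₂(ℤ)_{α₀} of α₀. -/
open scoped Classical

/-- The crossratio `[a,b,c,d] = ((c−a)(d−b))/((c−b)(d−a))` of four pairwise distinct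
real numbers. -/
noncomputable def crossRatio (a b c d : ℝ) : ℝ := ((c - a) * (d - b)) / ((c - b) * (d - a))

/-- The relative height `H_{α₀}(β)` of a real quadratic irrational `β ∉ {α₀, α₀^σ}`
with respect to `α₀`. -/
noncomputable def relHeight (α₀ β : ℝ) : ℝ :=
  1 / max |crossRatio α₀ β (galConj α₀) (galConj β)|
      |crossRatio α₀ (galConj β) (galConj α₀) β|

open Matrix in
/-- The denominator of an integral homography does not vanish at an irrational number. -/
lemma mob_denom_ne_zero (A : SpecialLinearGroup (Fin 2) ℤ) {x : ℝ} (hx : Irrational x) :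
    (A.1 1 0 : ℝ) * x + (A.1 1 1 : ℝ) ≠ 0 := by
  have hdet := A.2
  rw [det_fin_two] at hdet
  intro h
  by_cases hc : A.1 1 0 = 0
  · rw [hc] at h hdet
    have hd : A.1 1 1 = 0 := by exact_mod_cast (by simpa using h : (A.1 1 1 : ℝ) = 0)
    simp [hd] at hdet
  · exact ((hx.intCast_mul hc).add_intCast _).ne_zero h

open Matrix in
lemma det_real_eq_one (A : SpecialLinearGroup (Fin 2) ℤ) :
    (A.1 0 0 : ℝ) * A.1 1 1 - (A.1 0 1 : ℝ) * A.1 1 0 = 1 := by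
  have hdet := A.2
  rw [det_fin_two] at hdet
  exact_mod_cast hdet

open Matrix in
lemma val_inv_eq (A : SpecialLinearGroup (Fin 2) ℤ) :
    (A⁻¹).1 = !![A.1 1 1, -A.1 0 1; -A.1 1 0, A.1 0 0] :=
  (Matrix.SpecialLinearGroup.coe_inv A).trans (adjugate_fin_two _)

open Matrix in
lemma val_mul_apply (A B : SpecialLinearGroup (Fin 2) ℤ) (i j : Fin 2) :
    (A * B).1 i j = A.1 i 0 * B.1 0 j + A.1 i 1 * B.1 1 j :=
  (congr_fun₂ (Matrix.SpecialLinearGroup.coe_mul A B) i j).trans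
    ((mul_apply).trans (Fin.sum_univ_two _))

open Matrix in
lemma mob_sub_mob (A : SpecialLinearGroup (Fin 2) ℤ) {x y : ℝ} (hx : Irrational x)
    (hy : Irrational y) :
    mob A x - mob A y = (x - y) /
      (((A.1 1 0 : ℝ) * x + (A.1 1 1 : ℝ)) * ((A.1 1 0 : ℝ) * y + (A.1 1 1 : ℝ))) := by
  have h1 := mob_denom_ne_zero A hx
  have h2 := mob_denom_ne_zero A hy
  have hd := det_real_eq_one A
  unfold mob
  rw [div_sub_div _ _ h1 h2]
  congr 1
  linear_combination (x - y) * hd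

open Matrix in
lemma mob_injOn (A : SpecialLinearGroup (Fin 2) ℤ) {x y : ℝ} (hx : Irrational x)
    (hy : Irrational y) (h : mob A x = mob A y) : x = y := by
  have h1 := mob_denom_ne_zero A hx
  have h2 := mob_denom_ne_zero A hy
  have h3 := mob_sub_mob A hx hy
  rw [h, sub_self, eq_comm, div_eq_zero_iff] at h3
  exact sub_eq_zero.1 (h3.resolve_right (mul_ne_zero h1 h2))

open Matrix in
lemma mob_inv_mob (A : SpecialLinearGroup (Fin 2) ℤ) {x : ℝ} (hx : Irrational x) :
    mob A⁻¹ (mob A x) = x := by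
  have h1 := mob_denom_ne_zero A hx
  have hd := det_real_eq_one A
  unfold mob
  rw [val_inv_eq]
  simp only [of_apply, cons_val', cons_val_zero, cons_val_one, cons_val_fin_one, Int.cast_neg]
  have h2 : -(A.1 1 0 : ℝ) * (((A.1 0 0 : ℝ) * x + (A.1 0 1 : ℝ)) /
      ((A.1 1 0 : ℝ) * x + (A.1 1 1 : ℝ))) + A.1 0 0 =
      1 / ((A.1 1 0 : ℝ) * x + (A.1 1 1 : ℝ)) := by
    field_simp
    linear_combination hd
  have h3 : (A.1 1 1 : ℝ) * (((A.1 0 0 : ℝ) * x + (A.1 0 1 : ℝ)) /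
      ((A.1 1 0 : ℝ) * x + (A.1 1 1 : ℝ))) + -A.1 0 1 =
      x / ((A.1 1 0 : ℝ) * x + (A.1 1 1 : ℝ)) := by
    rw [eq_div_iff h1, add_mul, mul_assoc, div_mul_cancel₀ _ h1]
    linear_combination x * hd
  rw [h2, h3, div_div_div_cancel_right₀ h1, div_one]

open Matrix in
lemma irrational_mob (A : SpecialLinearGroup (Fin 2) ℤ) {x : ℝ} (hx : Irrational x) :
    Irrational (mob A x) := by
  rintro ⟨q, hq⟩
  refine hx ⟨((A⁻¹.1 0 0 : ℚ) * q + A⁻¹.1 0 1) / ((A⁻¹.1 1 0 : ℚ) * q + A⁻¹.1 1 1), ?_⟩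
  rw [← mob_inv_mob A hx, ← hq]
  simp [mob]

/-- An integral binary quadratic form with the irrational root `x`, in coordinates. -/
def IsFormOf (a b c : ℤ) (x : ℝ) : Prop :=
  a ≠ 0 ∧ (a : ℝ) * x ^ 2 + (b : ℝ) * x + (c : ℝ) = 0

lemma IsQuadIrr.exists_isFormOf {x : ℝ} (hx : IsQuadIrr x) : ∃ a b c : ℤ, IsFormOf a b c x := by
  obtain ⟨-, a, b, c, ha, h⟩ := hx
  refine ⟨a.num * b.den * c.den, b.num * a.den * c.den, c.num * a.den * b.den, ?_, ?_⟩
  · simp [ha]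
  · have ha' : (a.den : ℝ) ≠ 0 := by simp
    have hb' : (b.den : ℝ) ≠ 0 := by simp
    have hc' : (c.den : ℝ) ≠ 0 := by simp
    rw [Rat.cast_def a, Rat.cast_def b, Rat.cast_def c] at h
    field_simp at h
    push_cast
    linear_combination h

lemma IsFormOf.two_mul_add_ne_zero {a b c : ℤ} {x : ℝ} (h : IsFormOf a b c x)
    (hx : Irrational x) : 2 * (a : ℝ) * x + b ≠ 0 := by
  have := ((hx.intCast_mul (m := 2 * a) (by simp [h.1])).add_intCast b).ne_zero
  push_cast at this
  exact this

lemma IsFormOf.sq_eq_discrim {a b c : ℤ} {x : ℝ} (h : IsFormOf a b c x) :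
    (2 * (a : ℝ) * x + b) ^ 2 = ((b ^ 2 - 4 * a * c : ℤ) : ℝ) := by
  push_cast
  linear_combination 4 * (a : ℝ) * h.2

lemma IsFormOf.isGalConj {a b c : ℤ} {x : ℝ} (h : IsFormOf a b c x) (hx : Irrational x) :
    IsGalConj x (-(b : ℝ) / a - x) := by
  have ha : (a : ℝ) ≠ 0 := by exact_mod_cast h.1
  refine ⟨hx, ?_, a, b, c, by exact_mod_cast h.1, by exact_mod_cast h.2, ?_⟩
  · intro h'
    apply h.two_mul_add_ne_zero hx
    field_simp at h'
    linear_combination -h'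
  · push_cast
    rw [← h.2]
    field_simp
    ring

lemma IsGalConj.unique {x σ τ : ℝ} (h : IsGalConj x σ) (h' : IsGalConj x τ) : σ = τ := by
  obtain ⟨hx, hσ, a, b, c, ha, h1, h2⟩ := h
  obtain ⟨-, hτ, a', b', c', ha', h1', h2'⟩ := h'
  have hs : (a : ℝ) * (σ + x) + b = 0 :=
    mul_left_cancel₀ (sub_ne_zero.2 hσ) (by linear_combination h2 - h1)
  have ht : (a' : ℝ) * (τ + x) + b' = 0 :=
    mul_left_cancel₀ (sub_ne_zero.2 hτ) (by linear_combination h2' - h1')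
  have hb : a' * b - a * b' = 0 := by
    by_contra hne
    refine ((hx.ratCast_mul hne).add_ratCast (a' * c - a * c')).ne_zero ?_
    push_cast
    linear_combination (a' : ℝ) * h1 - (a : ℝ) * h1'
  have hb' : (a' : ℝ) * b - a * b' = 0 := by exact_mod_cast hb
  have haR : (a : ℝ) ≠ 0 := by exact_mod_cast ha
  have haR' : (a' : ℝ) ≠ 0 := by exact_mod_cast ha'
  refine mul_left_cancel₀ (mul_ne_zero haR haR') ?_
  linear_combination (a' : ℝ) * hs - (a : ℝ) * ht - hb'

lemma IsGalConj.galConj_eq {x σ : ℝ} (h : IsGalConj x σ) : galConj x = σ := by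
  have hex : ∃ σ, IsGalConj x σ := ⟨σ, h⟩
  rw [galConj, dif_pos hex]
  exact hex.choose_spec.unique h

lemma IsFormOf.galConj_eq {a b c : ℤ} {x : ℝ} (h : IsFormOf a b c x) (hx : Irrational x) :
    galConj x = -(b : ℝ) / a - x :=
  (h.isGalConj hx).galConj_eq

lemma IsQuadIrr.isGalConj {x : ℝ} (hx : IsQuadIrr x) : IsGalConj x (galConj x) := by
  obtain ⟨a, b, c, h⟩ := hx.exists_isFormOf
  rw [h.galConj_eq hx.1]
  exact h.isGalConj hx.1

lemma IsQuadIrr.irrational_galConj {x : ℝ} (hx : IsQuadIrr x) : Irrational (galConj x) := by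
  obtain ⟨a, b, c, h⟩ := hx.exists_isFormOf
  rw [h.galConj_eq hx.1]
  have := hx.1.ratCast_sub (-b / a)
  push_cast at this
  exact this

open Matrix in
/-- Evaluation of the transported form `g ∘ A⁻¹` at the image of a point by `A`. -/
lemma transport_eval (A : SpecialLinearGroup (Fin 2) ℤ) (a b c : ℤ) {x : ℝ} (hx : Irrational x) :
    ((a * A.1 1 1 ^ 2 - b * A.1 1 1 * A.1 1 0 + c * A.1 1 0 ^ 2 : ℤ) * mob A x ^ 2 +
      (-2 * a * A.1 1 1 * A.1 0 1 + b * (A.1 1 1 * A.1 0 0 + A.1 0 1 * A.1 1 0)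
        - 2 * c * A.1 1 0 * A.1 0 0 : ℤ) * mob A x +
      (a * A.1 0 1 ^ 2 - b * A.1 0 1 * A.1 0 0 + c * A.1 0 0 ^ 2 : ℤ)) *
      ((A.1 1 0 : ℝ) * x + (A.1 1 1 : ℝ)) ^ 2 = a * x ^ 2 + b * x + c := by
  have h1 := mob_denom_ne_zero A hx
  have hd := det_real_eq_one A
  have hm : mob A x * ((A.1 1 0 : ℝ) * x + (A.1 1 1 : ℝ)) =
      (A.1 0 0 : ℝ) * x + (A.1 0 1 : ℝ) := div_mul_cancel₀ _ h1
  generalize mob A x = m at *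
  have h2 : ((A.1 1 1 : ℝ) * m - A.1 0 1) * ((A.1 1 0 : ℝ) * x + (A.1 1 1 : ℝ)) = x := by
    linear_combination (A.1 1 1 : ℝ) * hm + x * hd
  have h3 : (-(A.1 1 0 : ℝ) * m + A.1 0 0) * ((A.1 1 0 : ℝ) * x + (A.1 1 1 : ℝ)) = 1 := by
    linear_combination -(A.1 1 0 : ℝ) * hm + hd
  generalize (A.1 1 0 : ℝ) * x + (A.1 1 1 : ℝ) = j at *
  have h4 : (a : ℝ) * x ^ 2 + b * x + c = a * x ^ 2 + b * (x * 1) + c * 1 ^ 2 := by ring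
  rw [h4, ← h3, ← h2]
  push_cast
  ring

open Matrix in
lemma IsFormOf.exists_transport {a b c : ℤ} {x : ℝ} (h : IsFormOf a b c x) (hx : Irrational x)
    (A : SpecialLinearGroup (Fin 2) ℤ) :
    ∃ a' b' c' : ℤ, IsFormOf a' b' c' (mob A x) ∧ b' ^ 2 - 4 * a' * c' = b ^ 2 - 4 * a * c ∧
      ∀ y : ℝ, Irrational y → (a' * mob A y ^ 2 + b' * mob A y + c') *
        ((A.1 1 0 : ℝ) * y + (A.1 1 1 : ℝ)) ^ 2 = a * y ^ 2 + b * y + c := by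
  have htr := fun y hy => transport_eval A a b c (x := y) hy
  have hdisc : (-2 * a * A.1 1 1 * A.1 0 1 + b * (A.1 1 1 * A.1 0 0 + A.1 0 1 * A.1 1 0)
        - 2 * c * A.1 1 0 * A.1 0 0) ^ 2 -
      4 * (a * A.1 1 1 ^ 2 - b * A.1 1 1 * A.1 1 0 + c * A.1 1 0 ^ 2) *
        (a * A.1 0 1 ^ 2 - b * A.1 0 1 * A.1 0 0 + c * A.1 0 0 ^ 2) = b ^ 2 - 4 * a * c := by
    have hdet := A.2
    rw [det_fin_two] at hdet
    linear_combination (b ^ 2 - 4 * a * c) *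
      (A.1 0 0 * A.1 1 1 - A.1 0 1 * A.1 1 0 + 1) * hdet
  generalize a * A.1 1 1 ^ 2 - b * A.1 1 1 * A.1 1 0 + c * A.1 1 0 ^ 2 = a' at *
  generalize -2 * a * A.1 1 1 * A.1 0 1 + b * (A.1 1 1 * A.1 0 0 + A.1 0 1 * A.1 1 0)
        - 2 * c * A.1 1 0 * A.1 0 0 = b' at *
  generalize a * A.1 0 1 ^ 2 - b * A.1 0 1 * A.1 0 0 + c * A.1 0 0 ^ 2 = c' at *
  have hroot : (a' : ℝ) * mob A x ^ 2 + b' * mob A x + c' = 0 := by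
    have := htr x hx
    rw [h.2, mul_eq_zero] at this
    exact this.resolve_right (pow_ne_zero _ (mob_denom_ne_zero A hx))
  refine ⟨a', b', c', ⟨?_, hroot⟩, hdisc, htr⟩
  rintro rfl
  have hb : b' ≠ 0 := by
    rintro rfl
    have h0 := h.sq_eq_discrim
    rw [← hdisc] at h0
    exact h.two_mul_add_ne_zero hx (by simpa using h0)
  refine (((irrational_mob A hx).intCast_mul hb).add_intCast c').ne_zero ?_
  simpa using hroot

open Matrix in
lemma IsQuadIrr.isQuadIrr_mob {x : ℝ} (hx : IsQuadIrr x) (A : SpecialLinearGroup (Fin 2) ℤ) :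
    IsQuadIrr (mob A x) := by
  obtain ⟨a, b, c, h⟩ := hx.exists_isFormOf
  obtain ⟨a', b', c', h', -⟩ := h.exists_transport hx.1 A
  exact ⟨irrational_mob A hx.1, a', b', c', by exact_mod_cast h'.1, by exact_mod_cast h'.2⟩

open Matrix in
lemma IsQuadIrr.galConj_mob {x : ℝ} (hx : IsQuadIrr x) (A : SpecialLinearGroup (Fin 2) ℤ) :
    galConj (mob A x) = mob A (galConj x) := by
  obtain ⟨a, b, c, h⟩ := hx.exists_isFormOf
  obtain ⟨a', b', c', h', -, htr⟩ := h.exists_transport hx.1 A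
  have hσ := hx.irrational_galConj
  refine IsGalConj.galConj_eq ⟨irrational_mob A hx.1,
    fun e => hx.isGalConj.2.1 (mob_injOn A hσ hx.1 e), a', b', c', by exact_mod_cast h'.1,
    by exact_mod_cast h'.2, ?_⟩
  have h0 : (a : ℝ) * galConj x ^ 2 + b * galConj x + c = 0 := by
    have ha : (a : ℝ) ≠ 0 := by exact_mod_cast h.1
    rw [h.galConj_eq hx.1, ← h.2]
    field_simp
    ring
  have := htr _ hσ
  rw [h0, mul_eq_zero] at this
  exact_mod_cast this.resolve_right (pow_ne_zero _ (mob_denom_ne_zero A hσ))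

lemma IsQuadIrr.galConj_galConj {x : ℝ} (hx : IsQuadIrr x) : galConj (galConj x) = x := by
  obtain ⟨-, h1, a, b, c, ha, h2, h3⟩ := hx.isGalConj
  exact IsGalConj.galConj_eq ⟨hx.irrational_galConj, h1.symm, a, b, c, ha, h3, h2⟩

open Matrix in
lemma crossRatio_mob (A : SpecialLinearGroup (Fin 2) ℤ) {x y z w : ℝ} (hx : Irrational x)
    (hy : Irrational y) (hz : Irrational z) (hw : Irrational w) :
    crossRatio (mob A x) (mob A y) (mob A z) (mob A w) = crossRatio x y z w := by
  have h1 := mob_denom_ne_zero A hx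
  have h2 := mob_denom_ne_zero A hy
  have h3 := mob_denom_ne_zero A hz
  have h4 := mob_denom_ne_zero A hw
  unfold crossRatio
  rw [mob_sub_mob A hz hx, mob_sub_mob A hw hy, mob_sub_mob A hz hy, mob_sub_mob A hw hx]
  generalize (A.1 1 0 : ℝ) * x + (A.1 1 1 : ℝ) = j1 at *
  generalize (A.1 1 0 : ℝ) * y + (A.1 1 1 : ℝ) = j2 at *
  generalize (A.1 1 0 : ℝ) * z + (A.1 1 1 : ℝ) = j3 at *
  generalize (A.1 1 0 : ℝ) * w + (A.1 1 1 : ℝ) = j4 at *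
  rw [div_mul_div_comm, div_mul_div_comm,
    show j3 * j2 * (j4 * j1) = j3 * j1 * (j4 * j2) by ring,
    div_div_div_cancel_right₀ (by simp [h1, h2, h3, h4])]

open Matrix in
lemma relHeight_mob {α β : ℝ} (hα : IsQuadIrr α) (hβ : IsQuadIrr β)
    {A : SpecialLinearGroup (Fin 2) ℤ} (hA : mob A α = α) :
    relHeight α (mob A β) = relHeight α β := by
  have hA' : mob A (galConj α) = galConj α := by rw [← hα.galConj_mob, hA]
  have h1 := crossRatio_mob A hα.1 hβ.1 hα.irrational_galConj hβ.irrational_galConj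
  have h2 := crossRatio_mob A hα.1 hβ.irrational_galConj hα.irrational_galConj hβ.1
  rw [hA, hA'] at h1 h2
  rw [relHeight, hβ.galConj_mob, h1, h2, relHeight]

/-- The vector `(x, 1)` is an eigenvector of `A` for the eigenvalue `e`. -/
def IsEig (A : Matrix.SpecialLinearGroup (Fin 2) ℤ) (e x : ℝ) : Prop :=
  (A.1 0 0 : ℝ) * x + A.1 0 1 = e * x ∧ (A.1 1 0 : ℝ) * x + A.1 1 1 = e

open Matrix in
lemma IsEig.mul {A B : SpecialLinearGroup (Fin 2) ℤ} {e f x : ℝ} (hA : IsEig A e x)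
    (hB : IsEig B f x) : IsEig (A * B) (e * f) x := by
  obtain ⟨h1, h2⟩ := hA
  obtain ⟨h3, h4⟩ := hB
  constructor
  · rw [val_mul_apply, val_mul_apply]
    push_cast
    linear_combination (A.1 0 0 : ℝ) * h3 + (A.1 0 1 : ℝ) * h4 + f * h1
  · rw [val_mul_apply, val_mul_apply]
    push_cast
    linear_combination (A.1 1 0 : ℝ) * h3 + (A.1 1 1 : ℝ) * h4 + f * h2

open Matrix in
lemma IsEig.inv {A : SpecialLinearGroup (Fin 2) ℤ} {e x : ℝ} (hA : IsEig A e x) (he : e ≠ 0) :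
    IsEig A⁻¹ e⁻¹ x := by
  obtain ⟨h1, h2⟩ := hA
  have hd := det_real_eq_one A
  unfold IsEig
  rw [val_inv_eq]
  simp only [of_apply, cons_val', cons_val_zero, cons_val_one, cons_val_fin_one, Int.cast_neg]
  constructor
  · refine mul_left_cancel₀ he ?_
    rw [← mul_assoc, mul_inv_cancel₀ he]
    linear_combination (A.1 0 1 : ℝ) * h2 - (A.1 1 1 : ℝ) * h1 + x * hd
  · refine mul_left_cancel₀ he ?_
    rw [mul_inv_cancel₀ he]
    linear_combination (A.1 1 0 : ℝ) * h1 - (A.1 0 0 : ℝ) * h2 + hd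

open Matrix in
lemma IsEig.zpow {A : SpecialLinearGroup (Fin 2) ℤ} {e x : ℝ} (hA : IsEig A e x) (he : e ≠ 0)
    (k : ℤ) : IsEig (A ^ k) (e ^ k) x := by
  induction k with
  | zero => simp [IsEig]
  | succ n ih =>
    rw [_root_.zpow_add_one, zpow_add_one₀ he]
    exact ih.mul hA
  | pred n ih =>
    rw [_root_.zpow_sub_one, zpow_sub_one₀ he]
    exact ih.mul (hA.inv he)

open Matrix in
lemma IsEig.mob_eq {A : SpecialLinearGroup (Fin 2) ℤ} {e x : ℝ} (hA : IsEig A e x) (he : e ≠ 0) :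
    mob A x = x := by
  rw [mob, hA.1, hA.2, mul_div_cancel_left₀ _ he]

open Matrix in
/-- Solutions of the Pell equation give hyperbolic elements of the stabiliser of a quadratic
irrational. -/
lemma IsFormOf.exists_isEig {a b c : ℤ} {x : ℝ} (h : IsFormOf a b c x) (hx : Irrational x) :
    ∃ (M : SpecialLinearGroup (Fin 2) ℤ) (e : ℝ), 1 < e ∧ IsEig M e x := by
  have hδ := h.two_mul_add_ne_zero hx
  have hsq := h.sq_eq_discrim
  have hpos : 0 < b ^ 2 - 4 * a * c := by
    have : (0 : ℝ) < ((b ^ 2 - 4 * a * c : ℤ) : ℝ) := by rw [← hsq]; positivity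
    exact_mod_cast this
  have hns : ¬ IsSquare (b ^ 2 - 4 * a * c) := by
    rintro ⟨k, hk⟩
    rw [hk] at hsq
    push_cast at hsq
    have hirr := (hx.intCast_mul (m := 2 * a) (by simp [h.1])).add_intCast b
    push_cast at hirr
    rcases mul_self_eq_mul_self_iff.1 ((sq _).symm.trans hsq) with h' | h'
    · exact hirr.ne_int k h'
    · exact hirr.ne_int (-k) (by push_cast; exact h')
  obtain ⟨u, v, huv, hv⟩ := Pell.exists_of_not_isSquare hpos hns
  have key : ∀ u v : ℤ, u ^ 2 - (b ^ 2 - 4 * a * c) * v ^ 2 = 1 → 0 < u →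
      0 < (v : ℝ) * (2 * (a : ℝ) * x + b) →
      ∃ (M : SpecialLinearGroup (Fin 2) ℤ) (e : ℝ), 1 < e ∧ IsEig M e x := by
    intro u v huv hu hv
    refine ⟨⟨!![u - b * v, -2 * c * v; 2 * a * v, u + b * v], ?_⟩,
      u + v * (2 * (a : ℝ) * x + b), ?_, ?_, ?_⟩
    · rw [det_fin_two_of]
      linear_combination huv
    · have : (1 : ℝ) ≤ u := by exact_mod_cast hu
      linarith
    · simp
      linear_combination (-2 * (v : ℝ)) * h.2
    · simp
      ring
  have hu0 : u ≠ 0 := by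
    rintro rfl
    nlinarith [sq_nonneg v]
  have hv0 : (v : ℝ) ≠ 0 := by exact_mod_cast hv
  rcases lt_or_gt_of_ne (mul_ne_zero hv0 hδ) with hneg | hp
  · refine key |u| (-v) (by rw [sq_abs]; linear_combination huv) (abs_pos.2 hu0) ?_
    push_cast
    linarith
  · exact key |u| v (by rw [sq_abs]; linear_combination huv) (abs_pos.2 hu0) hp

/-- A bound on the relative height bounds both products of differences occurring in the
crossratios. -/
lemma abs_mul_le_of_relHeight_le {α β s : ℝ} (hα : galConj α ≠ α) (hβ : galConj β ≠ β)
    (h1 : galConj α ≠ β) (h2 : galConj β ≠ α) (h3 : galConj α ≠ galConj β) (h4 : β ≠ α)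
    (h : relHeight α β ≤ s) :
    |(galConj α - β) * (galConj β - α)| ≤ (s + 1) * |(galConj α - α) * (galConj β - β)| ∧
    |(galConj α - galConj β) * (β - α)| ≤ (s + 1) * |(galConj α - α) * (galConj β - β)| := by
  unfold relHeight crossRatio at h
  set α' := galConj α
  set β' := galConj β
  have hw : 0 < |(α' - α) * (β' - β)| :=
    abs_pos.2 (mul_ne_zero (sub_ne_zero.2 hα) (sub_ne_zero.2 hβ))
  have hu : 0 < |(α' - β) * (β' - α)| :=
    abs_pos.2 (mul_ne_zero (sub_ne_zero.2 h1) (sub_ne_zero.2 h2))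
  have hv : 0 < |(α' - β') * (β - α)| :=
    abs_pos.2 (mul_ne_zero (sub_ne_zero.2 h3) (sub_ne_zero.2 h4))
  have hsub : (α' - β) * (β' - α) - (α' - β') * (β - α) = (α' - α) * (β' - β) := by ring
  rw [show (α' - α) * (β - β') = -((α' - α) * (β' - β)) by ring, abs_div, abs_div, abs_neg] at h
  generalize (α' - α) * (β' - β) = w at *
  generalize (α' - β) * (β' - α) = u at *
  generalize (α' - β') * (β - α) = v at *
  have huv : |u| ≤ |v| + |w| := by
    rw [← hsub]; linarith [abs_sub_abs_le_abs_sub u v]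
  have hvu : |v| ≤ |u| + |w| := by
    rw [← hsub, abs_sub_comm]; linarith [abs_sub_abs_le_abs_sub v u]
  rcases max_choice (|w| / |u|) (|w| / |v|) with hm | hm <;> rw [hm, one_div_div,
    div_le_iff₀ hw] at h <;> constructor <;> linarith

/-- The leading and middle coefficients of a quadratic polynomial are controlled by its values
at two points and its polar form at these points. -/
lemma abs_coeff_le {A B C p q K : ℝ} (hpq : p ≠ q) (h1 : |A * p ^ 2 + B * p + C| ≤ K)
    (h2 : |A * q ^ 2 + B * q + C| ≤ K) (h3 : |(p + q) * B + 2 * p * q * A + 2 * C| ≤ K) :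
    |A| ≤ 3 * K / (p - q) ^ 2 ∧
      |B| ≤ 3 * K / |p - q| + 3 * K / (p - q) ^ 2 * |p + q| := by
  have hne := sub_ne_zero.2 hpq
  have hA : |A| ≤ 3 * K / (p - q) ^ 2 := by
    rw [le_div_iff₀ (by positivity), ← abs_of_nonneg (sq_nonneg (p - q)), ← abs_mul,
      show A * (p - q) ^ 2 = (A * p ^ 2 + B * p + C) + (A * q ^ 2 + B * q + C) -
        ((p + q) * B + 2 * p * q * A + 2 * C) by ring]
    rw [abs_le] at *
    constructor <;> linarith
  refine ⟨hA, ?_⟩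
  have hB : |A * (p + q) + B| ≤ 3 * K / |p - q| := by
    rw [le_div_iff₀ (by positivity), ← abs_mul,
      show (A * (p + q) + B) * (p - q) = (A * p ^ 2 + B * p + C) - (A * q ^ 2 + B * q + C) by ring]
    rw [abs_le] at *
    constructor <;> linarith
  calc |B| = |(A * (p + q) + B) - A * (p + q)| := by congr 1; ring
    _ ≤ |A * (p + q) + B| + |A * (p + q)| := abs_sub _ _
    _ ≤ _ := by rw [abs_mul A]; gcongr

/-- Integral forms of given discriminant whose root has relative height at most `s` and whose
value at `α` is bounded above and below have bounded coefficients. -/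
lemma exists_coeff_bound {α : ℝ} (hα : IsQuadIrr α) (D : ℤ) (s E : ℝ) (hs : 0 < s) :
    ∃ N : ℤ, ∀ (β : ℝ) (a b c : ℤ), IsQuadIrr β → IsFormOf a b c β →
      b ^ 2 - 4 * a * c = D → β ≠ α → β ≠ galConj α → relHeight α β ≤ s →
      1 ≤ |(a : ℝ) * α ^ 2 + b * α + c| → |(a : ℝ) * α ^ 2 + b * α + c| ≤ E →
      |a| ≤ N ∧ |b| ≤ N := by
  set α' := galConj α with hα'
  set K : ℝ := (s + 1) * (|α' - α| * √D) with hK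
  have hK0 : 0 ≤ K := by positivity
  set L : ℝ := |E| + 2 * K + K ^ 2 with hL
  have hαne : α' ≠ α := hα.isGalConj.2.1
  refine ⟨max ⌊3 * L / (α - α') ^ 2⌋
    ⌊3 * L / |α - α'| + 3 * L / (α - α') ^ 2 * |α + α'|⌋, ?_⟩
  intro β a b c hβ hf hD h1 h2 hh hl hu
  have ha : (a : ℝ) ≠ 0 := by exact_mod_cast hf.1
  have h3 : galConj β ≠ α := by
    intro e; apply h2; rw [hα', ← e, hβ.galConj_galConj]
  have h4 : galConj α ≠ galConj β := by
    intro e; apply h1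
    rw [← hβ.galConj_galConj, ← e, hα.galConj_galConj]
  obtain ⟨hb1, hb2⟩ := abs_mul_le_of_relHeight_le hαne hβ.isGalConj.2.1 h2.symm h3 h4 h1 hh
  have hconj := hf.galConj_eq hβ.1
  have hsum : (b : ℝ) = -a * (β + galConj β) := by rw [hconj]; field_simp; ring
  have hprod : (c : ℝ) = a * (β * galConj β) := by
    rw [hconj]; field_simp; linear_combination hf.2
  have hδ : |(a : ℝ)| * |galConj β - β| = √D := by
    rw [← abs_mul, ← Real.sqrt_sq_eq_abs, ← hD, ← hf.sq_eq_discrim, hsum]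
    congr 1
    ring
  rw [← hα'] at *
  set β' := galConj β
  have e1 : |(a : ℝ) * ((α' - β) * (β' - α))| ≤ K := by
    rw [abs_mul, hK, ← hδ]
    calc _ ≤ |(a : ℝ)| * _ := mul_le_mul_of_nonneg_left hb1 (abs_nonneg _)
      _ = _ := by rw [abs_mul]; ring
  have e2 : |(a : ℝ) * ((α' - β') * (β - α))| ≤ K := by
    rw [abs_mul, hK, ← hδ]
    calc _ ≤ |(a : ℝ)| * _ := mul_le_mul_of_nonneg_left hb2 (abs_nonneg _)
      _ = _ := by rw [abs_mul]; ring
  have hval : |(a : ℝ) * α' ^ 2 + b * α' + c| ≤ K ^ 2 := by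
    calc _ ≤ |(a : ℝ) * α ^ 2 + b * α + c| * |(a : ℝ) * α' ^ 2 + b * α' + c| :=
          le_mul_of_one_le_left (abs_nonneg _) hl
      _ = |(a : ℝ) * ((α' - β) * (β' - α))| * |(a : ℝ) * ((α' - β') * (β - α))| := by
          rw [← abs_mul, ← abs_mul, hsum, hprod]
          congr 1
          ring
      _ ≤ K * K := mul_le_mul e1 e2 (abs_nonneg _) hK0
      _ = K ^ 2 := by ring
  have hpol : |(α + α') * b + 2 * α * α' * a + 2 * c| ≤ 2 * K := by
    have : (α + α') * b + 2 * α * α' * a + 2 * c =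
        -((a : ℝ) * ((α' - β) * (β' - α)) + (a : ℝ) * ((α' - β') * (β - α))) := by
      rw [hsum, hprod]; ring
    rw [this, abs_neg]
    linarith [abs_add_le ((a : ℝ) * ((α' - β) * (β' - α))) ((a : ℝ) * ((α' - β') * (β - α)))]
  have hE := le_abs_self E
  have hE0 := abs_nonneg E
  have hK2 := sq_nonneg K
  obtain ⟨hA, hB⟩ := abs_coeff_le (K := L) hαne.symm (by linarith) (by linarith) (by linarith)
  exact ⟨le_max_of_le_left (Int.le_floor.2 (by exact_mod_cast hA)),
    le_max_of_le_right (Int.le_floor.2 (by exact_mod_cast hB))⟩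

/-- Parkkonen-Paulin: `H_{α₀}` is a proper height function on
`PSL₂(ℤ)·β₀ ∖ {α₀, α₀^σ}` modulo the action of the stabiliser `PSL₂(ℤ)_{α₀}` of `α₀`:
(i) `H_{α₀}` is invariant under `PSL₂(ℤ)_{α₀}` (which preserves
`PSL₂(ℤ)·β₀ ∖ {α₀, α₀^σ}`), and (ii) for every `s > 0`, the sublevel set
`{β ∈ PSL₂(ℤ)·β₀ ∖ {α₀, α₀^σ} : H_{α₀}(β) ≤ s}` meets only finitely many orbits of
`PSL₂(ℤ)_{α₀}`. -/
theorem relHeight_invariant_and_proper (α₀ β₀ : ℝ)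
    (hα₀ : IsQuadIrr α₀) (hβ₀ : IsQuadIrr β₀) :
    (∀ A : Matrix.SpecialLinearGroup (Fin 2) ℤ, mob A α₀ = α₀ →
      ∀ β : ℝ, β ∈ mobOrbit β₀ → β ≠ α₀ → β ≠ galConj α₀ →
        (mob A β ≠ α₀ ∧ mob A β ≠ galConj α₀ ∧ relHeight α₀ (mob A β) = relHeight α₀ β)) ∧
    (∀ s : ℝ, 0 < s → ∃ T : Finset ℝ,
      ∀ β : ℝ, β ∈ mobOrbit β₀ → β ≠ α₀ → β ≠ galConj α₀ → relHeight α₀ β ≤ s →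
        ∃ β' ∈ T, ∃ A : Matrix.SpecialLinearGroup (Fin 2) ℤ,
          mob A α₀ = α₀ ∧ mob A β' = β) := by
  have horb : ∀ β ∈ mobOrbit β₀, IsQuadIrr β := by
    rintro _ ⟨A, rfl⟩
    exact hβ₀.isQuadIrr_mob A
  have hstab : ∀ A : Matrix.SpecialLinearGroup (Fin 2) ℤ, mob A α₀ = α₀ →
      ∀ β : ℝ, IsQuadIrr β → β ≠ α₀ → β ≠ galConj α₀ →
        (mob A β ≠ α₀ ∧ mob A β ≠ galConj α₀ ∧
          relHeight α₀ (mob A β) = relHeight α₀ β) := by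
    intro A hA β hβ h1 h2
    have hA' : mob A (galConj α₀) = galConj α₀ := by rw [← hα₀.galConj_mob, hA]
    refine ⟨fun e => h1 (mob_injOn A hβ.1 hα₀.1 (e.trans hA.symm)),
      fun e => h2 (mob_injOn A hβ.1 hα₀.irrational_galConj (e.trans hA'.symm)),
      relHeight_mob hα₀ hβ hA⟩
  refine ⟨fun A hA β hβ => hstab A hA β (horb β hβ), fun s hs => ?_⟩
  obtain ⟨a₀, b₀, c₀, hf₀⟩ := hβ₀.exists_isFormOf
  obtain ⟨a₁, b₁, c₁, hf₁⟩ := hα₀.exists_isFormOf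
  obtain ⟨M, e, he, hM⟩ := hf₁.exists_isEig hα₀.1
  have he0 : e ≠ 0 := by positivity
  set D := b₀ ^ 2 - 4 * a₀ * c₀ with hD
  obtain ⟨N, hN⟩ := exists_coeff_bound hα₀ D s (e ^ 2) hs
  refine ⟨((Finset.Icc (-N) N ×ˢ Finset.Icc (-N) N).image
      fun p : ℤ × ℤ => (√(D : ℝ) - p.2) / (2 * p.1)) ∪
    ((Finset.Icc (-N) N ×ˢ Finset.Icc (-N) N).image
      fun p : ℤ × ℤ => (-√(D : ℝ) - p.2) / (2 * p.1)), ?_⟩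
  intro β hβorb h1 h2 hs'
  have hβ := horb β hβorb
  obtain ⟨A, rfl⟩ := hβorb
  obtain ⟨a, b, c, hf, hdisc, -⟩ := hf₀.exists_transport hβ₀.1 A
  set β := mob A β₀
  have hval : (a : ℝ) * α₀ ^ 2 + b * α₀ + c ≠ 0 := by
    intro h0
    have hg : (a : ℝ) * (α₀ - β) * (α₀ - galConj β) = 0 := by
      have ha : (a : ℝ) ≠ 0 := by exact_mod_cast hf.1
      rw [hf.galConj_eq hβ.1]
      field_simp
      linear_combination h0 - hf.2
    rcases mul_eq_zero.1 hg with hg | hg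
    · rcases mul_eq_zero.1 hg with hg | hg
      · exact hf.1 (by exact_mod_cast hg)
      · exact h1 (sub_eq_zero.1 hg).symm
    · apply h2
      rw [sub_eq_zero.1 hg, hβ.galConj_galConj]
  obtain ⟨k, hk1, hk2⟩ := exists_mem_Ico_zpow (abs_pos.2 hval) (one_lt_pow₀ he two_ne_zero)
  have hMk := hM.zpow he0 k
  have hek : e ^ k ≠ 0 := zpow_ne_zero _ he0
  have hfix := hMk.mob_eq hek
  obtain ⟨a', b', c', hf', hdisc', htr⟩ := hf.exists_transport hβ.1 (M ^ k)
  obtain ⟨g1, g2, g3⟩ := hstab (M ^ k) hfix β hβ h1 h2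
  have hev := htr α₀ hα₀.1
  rw [hfix, hMk.2] at hev
  have hpk : (e ^ 2) ^ k = (e ^ k) ^ 2 := by
    rw [← zpow_natCast, ← zpow_mul, mul_comm, zpow_mul, zpow_natCast]
  have hpkpos : 0 < (e ^ k) ^ 2 := by positivity
  rw [zpow_add_one₀ (by positivity), hpk] at hk2
  rw [hpk] at hk1
  rw [← hev, abs_mul, abs_of_pos hpkpos] at hk1 hk2
  have hl : 1 ≤ |(a' : ℝ) * α₀ ^ 2 + b' * α₀ + c'| :=
    le_of_mul_le_mul_right (by simpa using hk1) hpkpos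
  have hu : |(a' : ℝ) * α₀ ^ 2 + b' * α₀ + c'| ≤ e ^ 2 :=
    le_of_mul_le_mul_right (by rw [mul_comm (e ^ 2)]; exact hk2.le) hpkpos
  have hDD : b' ^ 2 - 4 * a' * c' = D := hdisc'.trans hdisc
  obtain ⟨hNa, hNb⟩ := hN _ a' b' c' (hβ.isQuadIrr_mob _) hf' hDD g1 g2 (g3.trans_le hs') hl hu
  refine ⟨mob (M ^ k) β, ?_, (M ^ k)⁻¹, ?_, mob_inv_mob _ hβ.1⟩
  · have hsq := hf'.sq_eq_discrim
    have ha : (a' : ℝ) ≠ 0 := by exact_mod_cast hf'.1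
    have hD0 : (0 : ℝ) ≤ D := by rw [← hDD, ← hsq]; positivity
    rw [hDD, ← Real.sq_sqrt hD0, sq_eq_sq_iff_eq_or_eq_neg] at hsq
    have hmem : (a', b') ∈ Finset.Icc (-N) N ×ˢ Finset.Icc (-N) N := by
      simp only [Finset.mem_product, Finset.mem_Icc]
      exact ⟨abs_le.1 hNa, abs_le.1 hNb⟩
    rw [Finset.mem_union, Finset.mem_image, Finset.mem_image]
    rcases hsq with h | h
    · refine Or.inl ⟨_, hmem, ?_⟩
      rw [← h]
      field_simp
      ring
    · refine Or.inr ⟨_, hmem, ?_⟩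
      rw [← h]
      field_simp
      ring
  · conv_lhs => rw [← hfix]
    exact mob_inv_mob _ hα₀.1
end
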